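/- arXiv:2603.12019 — 13 statements merged into one kernel-verified Lean document; each statement's English description precedes it below -/
import Mathlib

section
/- Existence and uniqueness of the Clebsch–Gordan harmonic decomposition: for every elasticity tensor C ∈ Ela there exists exactly one quintuple (α, β, hᵃ, hᵇ, H) with α, β ∈ ℝ, hᵃ, hᵇ ∈ H², H ∈ H⁴ such that C equals the Clebsch–Gordan combination of (α, β, hᵃ, hᵇ, H), i.e. C_ijkl = α J_ijkl + β K_ijkl + (hᵃ ⊠ 1)_ijkl + (1/3)(hᵇ_ij δ_kl + δ_ij hᵇ_kl) + H_ijkl for all indices i, j, k, l. -/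
open scoped BigOperators

/-- Fourth-order tensors on `ℝ³`. -/
abbrev Tens4 : Type := Fin 3 → Fin 3 → Fin 3 → Fin 3 → ℝ

/-- 3×3 real matrices. -/
abbrev Mat3 : Type := Matrix (Fin 3) (Fin 3) ℝ

/-- Kronecker delta on `Fin 3`. -/
noncomputable def kdelta (i j : Fin 3) : ℝ := if i = j then 1 else 0

/-- Minor and major index symmetries of an elasticity tensor. -/
def IsEla (C : Tens4) : Prop :=
  ∀ i j k l, C i j k l = C j i k l ∧ C i j k l = C i j l k ∧ C i j k l = C k l i j

/-- Harmonic second-order tensors: symmetric and trace free. -/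
def IsH2 (h : Mat3) : Prop := h.IsSymm ∧ h.trace = 0

/-- Harmonic fourth-order tensors: totally symmetric and trace free. -/
def IsH4 (H : Tens4) : Prop :=
  (∀ (σ : Equiv.Perm (Fin 4)) (f : Fin 4 → Fin 3),
      H (f (σ 0)) (f (σ 1)) (f (σ 2)) (f (σ 3)) = H (f 0) (f 1) (f 2) (f 3)) ∧
  (∀ k l, ∑ i, H i i k l = 0)

/-- Spherical projector `K`. -/
noncomputable def Kt (i j k l : Fin 3) : ℝ := (1/3) * kdelta i j * kdelta k l

/-- Identity tensor `I` on symmetric second order tensors. -/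
noncomputable def It (i j k l : Fin 3) : ℝ :=
  (1/2) * (kdelta i k * kdelta j l + kdelta i l * kdelta j k)

/-- Deviatoric projector `J = I - K`. -/
noncomputable def Jt (i j k l : Fin 3) : ℝ := It i j k l - Kt i j k l

/-- The product `h ⊠ 1` for a harmonic second order tensor `h`. -/
noncomputable def boxOne (h : Mat3) (i j k l : Fin 3) : ℝ :=
  (1/7) * (3 * (h i k * kdelta j l + h i l * kdelta j k + kdelta i k * h j l + kdelta i l * h j k)
    - 4 * (h i j * kdelta k l + kdelta i j * h k l))

/-- The Clebsch–Gordan combination of `(α, β, hᵃ, hᵇ, H)`. -/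
noncomputable def CG (α β : ℝ) (ha hb : Mat3) (H : Tens4) (i j k l : Fin 3) : ℝ :=
  α * Jt i j k l + β * Kt i j k l + boxOne ha i j k l
    + (1/3) * (hb i j * kdelta k l + kdelta i j * hb k l) + H i j k l


lemma isH4_of (H : Tens4) (h1 : ∀ i j k l, H i j k l = H j i k l)
    (h2 : ∀ i j k l, H i j k l = H i j l k)
    (h3 : ∀ i j k l, H i j k l = H i k j l)
    (h0 : ∀ k l, ∑ i, H i i k l = 0) : IsH4 H := by
  refine ⟨?_, h0⟩
  intro σ f
  have e01 : σ 0 ≠ σ 1 := fun h => by simpa using σ.injective h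
  have e02 : σ 0 ≠ σ 2 := fun h => by simpa using σ.injective h
  have e03 : σ 0 ≠ σ 3 := fun h => by simpa using σ.injective h
  have e12 : σ 1 ≠ σ 2 := fun h => by simpa using σ.injective h
  have e13 : σ 1 ≠ σ 3 := fun h => by simpa using σ.injective h
  have e23 : σ 2 ≠ σ 3 := fun h => by simpa using σ.injective h
  generalize σ 0 = a at *
  generalize σ 1 = b at *
  generalize σ 2 = c at *
  generalize σ 3 = d at *
  fin_cases a <;> fin_cases b <;> first | exact absurd rfl e01 | skip
  all_goals fin_cases c <;> first | exact absurd rfl e02 | exact absurd rfl e12 | skip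
  all_goals fin_cases d <;>
    first | exact absurd rfl e03 | exact absurd rfl e13 | exact absurd rfl e23 | skip
  all_goals
    clear e01 e02 e03 e12 e13 e23
    simp only [Fin.zero_eta, Fin.mk_one, Fin.reduceFinMk] <;> grind

lemma cg_tr1 (α β : ℝ) (ha hb : Mat3) (H : Tens4) (h1 : IsH2 ha) (h2 : IsH2 hb)
    (h3 : ∀ i j, ∑ k, H i j k k = 0) (i j : Fin 3) :
    ∑ k, CG α β ha hb H i j k k = β * kdelta i j + hb i j := by
  have t1 := h1.2
  have t2 := h2.2
  have s1 := fun i j => h1.1.apply i j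
  have h3 := h3 i j
  have a1 := s1 0 1
  have a2 := s1 0 2
  have a3 := s1 1 2
  simp only [Matrix.trace, Matrix.diag, Fin.sum_univ_three] at *
  fin_cases i <;> fin_cases j <;>
    simp [CG, Jt, It, Kt, boxOne, kdelta] at * <;> linarith

lemma cg_tr2 (α β : ℝ) (ha hb : Mat3) (H : Tens4) (h1 : IsH2 ha) (h2 : IsH2 hb)
    (h3 : ∀ i j, ∑ k, H i k j k = 0) (i j : Fin 3) :
    ∑ k, CG α β ha hb H i k j k = (5 / 3 * α + β / 3) * kdelta i j + ha i j + 2 / 3 * hb i j := by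
  have t1 := h1.2
  have t2 := h2.2
  have s1 := fun i j => h1.1.apply i j
  have s2 := fun i j => h2.1.apply i j
  have h3 := h3 i j
  have a1 := s1 0 1
  have a2 := s1 0 2
  have a3 := s1 1 2
  have b1 := s2 0 1
  have b2 := s2 0 2
  have b3 := s2 1 2
  simp only [Matrix.trace, Matrix.diag, Fin.sum_univ_three] at *
  fin_cases i <;> fin_cases j <;>
    simp [CG, Jt, It, Kt, boxOne, kdelta] at * <;> linarith

/-- dilatation trace -/
noncomputable def dil (C : Tens4) : Mat3 := fun i j => ∑ k, C i j k k
/-- Voigt trace -/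
noncomputable def voi (C : Tens4) : Mat3 := fun i j => ∑ k, C i k j k
noncomputable def cβ (C : Tens4) : ℝ := (dil C 0 0 + dil C 1 1 + dil C 2 2) / 3
noncomputable def cα (C : Tens4) : ℝ := (voi C 0 0 + voi C 1 1 + voi C 2 2 - cβ C) / 5
noncomputable def cb (C : Tens4) : Mat3 := fun i j => dil C i j - cβ C * kdelta i j
noncomputable def ca (C : Tens4) : Mat3 := fun i j =>
  voi C i j - 2 / 3 * cb C i j - (5 / 3 * cα C + cβ C / 3) * kdelta i j
noncomputable def cH (C : Tens4) : Tens4 := fun i j k l =>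
  C i j k l - CG (cα C) (cβ C) (ca C) (cb C) (fun _ _ _ _ => 0) i j k l

lemma cb_H2 (C : Tens4) (hC : IsEla C) : IsH2 (cb C) := by
  constructor
  · ext i j
    simp only [Matrix.transpose_apply, cb, dil, kdelta, eq_comm (a := j)]
    congr 1
    exact Finset.sum_congr rfl fun k _ => (hC _ _ _ _).1
  · simp [Matrix.trace, Fin.sum_univ_three, cb, kdelta, cβ]; ring

lemma ca_H2 (C : Tens4) (hC : IsEla C) : IsH2 (ca C) := by
  have hb := cb_H2 C hC
  constructor
  · ext i j
    have h2 : voi C j i = voi C i j := Finset.sum_congr rfl fun k _ => (hC _ _ _ _).2.2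
    have h3 := hb.1.apply i j
    simp only [Matrix.transpose_apply, ca, kdelta, eq_comm (a := j), h2, h3]
  · have := hb.2
    simp [Matrix.trace, Fin.sum_univ_three, ca, kdelta, cα] at *; linarith

lemma cg_ela (α β : ℝ) (ha hb : Mat3) (H : Tens4) (h1 : IsH2 ha) (h2 : IsH2 hb)
    (hH : IsEla H) : IsEla (CG α β ha hb H) := by
  intro i j k l
  have k0 : ∀ i j, kdelta i j = kdelta j i := fun i j => by simp [kdelta, eq_comm]
  have s1 := fun i j => h1.1.apply i j
  have s2 := fun i j => h2.1.apply i j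
  obtain ⟨e1, e2, e3⟩ := hH i j k l
  simp only [CG, Jt, It, Kt, boxOne]
  refine ⟨?_, ?_, ?_⟩
  · rw [e1, s2 i j, s1 i j, k0 j i]; ring
  · rw [e2, s2 k l, s1 k l, k0 l k]; ring
  · rw [e3, s1 k i, s1 k j, s1 l i, s1 l j, k0 k i, k0 k j, k0 l i, k0 l j]; ring

/-- In dimension three, a tensor with both traces vanishing is totally symmetric. -/
lemma sym_of (C : Tens4) (hC : IsEla C) (hd : ∀ i j, ∑ k, C i j k k = 0)
    (hv : ∀ i j, ∑ k, C i k j k = 0) (i j k l : Fin 3) : C i j k l = C i k j l := by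
  have r1 := fun k l => (hC 1 0 k l).1
  have r2 := fun k l => (hC 2 0 k l).1
  have r3 := fun k l => (hC 2 1 k l).1
  have l1 := fun k l => (hC k l 1 0).2.1
  have l2 := fun k l => (hC k l 2 0).2.1
  have l3 := fun k l => (hC k l 2 1).2.1
  have m1 := (hC 1 1 0 0).2.2
  have m2 := (hC 2 2 0 0).2.2
  have m3 := (hC 0 1 0 0).2.2
  have m4 := (hC 0 2 0 0).2.2
  have m5 := (hC 1 2 0 0).2.2
  have m6 := (hC 2 2 1 1).2.2
  have m7 := (hC 0 1 1 1).2.2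
  have m8 := (hC 0 2 1 1).2.2
  have m9 := (hC 1 2 1 1).2.2
  have m10 := (hC 0 1 2 2).2.2
  have m11 := (hC 0 2 2 2).2.2
  have m12 := (hC 1 2 2 2).2.2
  have m13 := (hC 0 2 0 1).2.2
  have m14 := (hC 1 2 0 1).2.2
  have m15 := (hC 1 2 0 2).2.2
  have d1 := hd 0 0
  have d2 := hd 1 1
  have d3 := hd 2 2
  have d4 := hd 0 1
  have d5 := hd 0 2
  have d6 := hd 1 2
  have v1 := hv 0 0
  have v2 := hv 1 1
  have v3 := hv 2 2
  have v4 := hv 0 1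
  have v5 := hv 0 2
  have v6 := hv 1 2
  clear hd hv hC
  simp only [Fin.sum_univ_three, r1, r2, r3, l1, l2, l3, m1, m2, m3, m4, m5, m6, m7, m8, m9,
    m10, m11, m12, m13, m14, m15] at d1 d2 d3 d4 d5 d6 v1 v2 v3 v4 v5 v6
  fin_cases i <;> fin_cases j <;> fin_cases k <;> fin_cases l <;>
    simp only [Fin.zero_eta, Fin.mk_one, Fin.reduceFinMk, r1, r2, r3, l1, l2, l3, m1, m2, m3,
      m4, m5, m6, m7, m8, m9, m10, m11, m12, m13, m14, m15] <;> linarith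

lemma cH_H4 (C : Tens4) (hC : IsEla C) : IsH4 (cH C) := by
  have ha := ca_H2 C hC
  have hb := cb_H2 C hC
  have he : IsEla (cH C) := by
    intro i j k l
    have h := cg_ela (cα C) (cβ C) (ca C) (cb C) (fun _ _ _ _ => 0) ha hb
      (fun _ _ _ _ => ⟨rfl, rfl, rfl⟩) i j k l
    have h' := hC i j k l
    simp only [cH]
    exact ⟨by rw [h'.1, h.1], by rw [h'.2.1, h.2.1], by rw [h'.2.2, h.2.2]⟩
  have hd : ∀ i j, ∑ k, cH C i j k k = 0 := by
    intro i j
    simp only [cH, Finset.sum_sub_distrib]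
    rw [cg_tr1 _ _ _ _ _ ha hb (by simp)]
    simp only [cb, dil]; ring
  have hv : ∀ i j, ∑ k, cH C i k j k = 0 := by
    intro i j
    simp only [cH, Finset.sum_sub_distrib]
    rw [cg_tr2 _ _ _ _ _ ha hb (by simp)]
    simp only [ca, voi]; ring
  refine isH4_of _ (fun i j k l => (he i j k l).1) (fun i j k l => (he i j k l).2.1)
    (sym_of _ he hd hv) ?_
  intro k l
  rw [← hd k l]
  exact Finset.sum_congr rfl fun i _ => (he _ _ _ _).2.2

/-- Existence and uniqueness of the Clebsch–Gordan harmonic decomposition. -/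
theorem cg_decomposition_existsUnique (C : Tens4) (hC : IsEla C) :
    ∃! q : ℝ × ℝ × Mat3 × Mat3 × Tens4,
      IsH2 q.2.2.1 ∧ IsH2 q.2.2.2.1 ∧ IsH4 q.2.2.2.2 ∧
      ∀ i j k l, C i j k l = CG q.1 q.2.1 q.2.2.1 q.2.2.2.1 q.2.2.2.2 i j k l := by
  refine ⟨(cα C, cβ C, ca C, cb C, cH C), ⟨ca_H2 C hC, cb_H2 C hC, cH_H4 C hC, ?_⟩, ?_⟩
  · intro i j k l
    simp only [cH, CG]; ring
  · rintro ⟨α, β, ha, hb, H⟩ ⟨h1, h2, ⟨hs, h0⟩, h⟩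
    dsimp only at h1 h2 hs h0 h
    have p2 : ∀ i j k l, H i k j l = H i j k l := fun i j k l => by
      simpa [Equiv.swap_apply_def] using
        hs (Equiv.swap 1 2) ![i, j, k, l]
    have p3 : ∀ i j k l, H j i k l = H i j k l := fun i j k l => by
      simpa [Equiv.swap_apply_def] using
        hs (Equiv.swap 0 1) ![i, j, k, l]
    have p4 : ∀ i j k l, H i j l k = H i j k l := fun i j k l => by
      simpa [Equiv.swap_apply_def] using
        hs (Equiv.swap 2 3) ![i, j, k, l]
    have p1 : ∀ i j k l, H k l i j = H i j k l := fun i j k l => by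
      rw [← p2 k l i j, p3 i k l j, p4 i k j l, p2 i j k l]
    have q1 : ∀ i j, ∑ k, H i j k k = 0 := fun i j => by
      rw [← h0 i j]; exact Finset.sum_congr rfl fun k _ => p1 _ _ _ _
    have q2 : ∀ i j, ∑ k, H i k j k = 0 := fun i j => by
      rw [← q1 i j]; exact Finset.sum_congr rfl fun k _ => p2 _ _ _ _
    have t1 : ∀ i j, dil C i j = β * kdelta i j + hb i j := fun i j => by
      rw [← cg_tr1 α β ha hb H h1 h2 q1]; exact Finset.sum_congr rfl fun k _ => h _ _ _ _
    have t2 : ∀ i j, voi C i j = (5 / 3 * α + β / 3) * kdelta i j + ha i j + 2 / 3 * hb i j :=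
      fun i j => by
        rw [← cg_tr2 α β ha hb H h1 h2 q2]; exact Finset.sum_congr rfl fun k _ => h _ _ _ _
    have u1 := h1.2
    have u2 := h2.2
    simp only [Matrix.trace, Matrix.diag, Fin.sum_univ_three] at u1 u2
    have eβ : β = cβ C := by simp [cβ, t1, kdelta]; linarith
    have eα : α = cα C := by rw [cα, ← eβ]; simp [t2, kdelta]; linarith
    have eb : hb = cb C := by ext i j; rw [cb, ← eβ, t1]; ring
    have ea : ha = ca C := by ext i j; rw [ca, ← eβ, ← eα, ← eb, t2]; ring
    have eH : H = cH C := by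
      funext i j k l
      rw [cH, ← eβ, ← eα, ← eb, ← ea, h]; simp only [CG]; ring
    rw [← eβ, ← eα, ← eb, ← ea, ← eH]
end

section
/- Recovery formulas for the Clebsch–Gordan harmonic decomposition: suppose C ∈ Ela equals the Clebsch–Gordan combination of (α, β, hᵃ, hᵇ, H) with α, β ∈ ℝ, hᵃ, hᵇ ∈ H², H ∈ H⁴. Let C^dd be the tensor with components C^dd_ijkl = ∑_{p,q,r,s} J_ijpq C_pqrs J_rskl. Then α = (1/5) ∑_{i,j,k,l} C^dd_ijkl J_ijkl, β = (1/3) ∑_{i,k} C_iikk, hᵃ_jl = ∑_i C^dd_ijil − (1/3) δ_jl ∑_{i,p} C^dd_ipip, hᵇ_ij = ∑_k C_ijkk − (1/3) δ_ij ∑_{p,k} C_ppkk, and H_ijkl = C^dd_ijkl − (hᵃ ⊠ 1)_ijkl − α J_ijkl. -/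
open scoped BigOperators

/-- The deviatoric part `C^dd = J : C : J` of an elasticity tensor. -/
noncomputable def Cdd (C : Tens4) (i j k l : Fin 3) : ℝ :=
  ∑ p, ∑ q, ∑ r, ∑ s, Jt i j p q * C p q r s * Jt r s k l

theorem aux_left (X : Fin 3 → Fin 3 → ℝ) (hX : ∀ p q, X p q = X q p) (i j : Fin 3) :
    ∑ p, ∑ q, Jt i j p q * X p q = X i j - (1/3) * kdelta i j * ∑ p, X p p := by
  have h1 := hX 1 0
  have h2 := hX 2 0
  have h3 := hX 2 1
  fin_cases i <;> fin_cases j <;>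
    simp [Fin.sum_univ_three, Jt, It, Kt, kdelta, h1, h2, h3] <;> ring

theorem aux_Jsymm (r s k l : Fin 3) : Jt r s k l = Jt k l r s := by
  have hk : ∀ a b, kdelta a b = kdelta b a := fun a b => by simp [kdelta, eq_comm]
  unfold Jt It Kt
  rw [hk r k, hk s l, hk r l, hk s k]
  ring

theorem aux_Cdd (C : Tens4) (hC : IsEla C) (i j k l : Fin 3) :
    Cdd C i j k l = C i j k l - (1/3) * kdelta i j * ∑ p, C p p k l
      - (1/3) * kdelta k l * ∑ r, C i j r r
      + (1/9) * kdelta i j * kdelta k l * ∑ p, ∑ r, C p p r r := by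
  have e : Cdd C i j k l = ∑ p, ∑ q, Jt i j p q *
      (C p q k l - (1/3) * kdelta k l * ∑ r, C p q r r) := by
    unfold Cdd
    refine Finset.sum_congr rfl fun p _ => Finset.sum_congr rfl fun q _ => ?_
    rw [← aux_left (C p q) (fun a b => (hC p q a b).2.1) k l]
    simp only [Finset.mul_sum]
    refine Finset.sum_congr rfl fun r _ => Finset.sum_congr rfl fun s _ => ?_
    rw [aux_Jsymm r s k l]
    ring
  rw [e, aux_left (fun p q => C p q k l - (1/3) * kdelta k l * ∑ r, C p q r r)]
  · simp only [Fin.sum_univ_three]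
    ring
  · intro p q
    have : ∀ a b, C p q a b = C q p a b := fun a b => (hC p q a b).1
    simp only [this]

/-- Recovery formulas for the Clebsch–Gordan harmonic decomposition. -/
theorem cg_recovery (C : Tens4) (hC : IsEla C) (α β : ℝ) (ha hb : Mat3) (H : Tens4)
    (hha : IsH2 ha) (hhb : IsH2 hb) (hH : IsH4 H)
    (hdec : ∀ i j k l, C i j k l = CG α β ha hb H i j k l) :
    α = (1/5) * ∑ i, ∑ j, ∑ k, ∑ l, Cdd C i j k l * Jt i j k l ∧
    β = (1/3) * ∑ i, ∑ k, C i i k k ∧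
    (∀ j l, ha j l = (∑ i, Cdd C i j i l) - (1/3) * kdelta j l * ∑ i, ∑ p, Cdd C i p i p) ∧
    (∀ i j, hb i j = (∑ k, C i j k k) - (1/3) * kdelta i j * ∑ p, ∑ k, C p p k k) ∧
    (∀ i j k l, H i j k l = Cdd C i j k l - boxOne ha i j k l - α * Jt i j k l) := by
  have kk : ∀ a b : Fin 3, kdelta a b = if a = b then 1 else 0 := fun _ _ => rfl
  have hka : ∀ a b, kdelta a b = kdelta b a := fun a b => by simp [kdelta, eq_comm]
  have sa : ∀ a b, ha a b = ha b a := fun a b => hha.1.apply b a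
  have sb : ∀ a b, hb a b = hb b a := fun a b => hhb.1.apply b a
  have ta : ha 0 0 + ha 1 1 + ha 2 2 = 0 := by
    have := hha.2
    simpa [Matrix.trace, Fin.sum_univ_three] using this
  have tb : hb 0 0 + hb 1 1 + hb 2 2 = 0 := by
    have := hhb.2
    simpa [Matrix.trace, Fin.sum_univ_three] using this
  have tH : ∀ k l, H 0 0 k l + H 1 1 k l + H 2 2 k l = 0 := fun k l => by
    have := hH.2 k l
    simpa [Fin.sum_univ_three] using this
  have tH2 : ∀ j l, H 0 j 0 l + H 1 j 1 l + H 2 j 2 l = 0 := fun j l => by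
    have sw : ∀ a, H a j a l = H a a j l := fun a => by
      have := hH.1 (Equiv.swap 1 2) ![a, a, j, l]
      simpa [Equiv.swap_apply_def] using this
    rw [sw, sw, sw, tH]
  have trl : ∀ k l, ∑ p, C p p k l = β * kdelta k l + hb k l := fun k l => by
    have a1 := sa 1 0
    have a2 := sa 2 0
    have a3 := sa 2 1
    have h := tH k l
    simp only [hdec, CG, boxOne, Fin.sum_univ_three]
    fin_cases k <;> fin_cases l <;> simp [Jt, It, Kt, kdelta] at h ⊢ <;> linarith
  have trr : ∀ i j, ∑ r, C i j r r = β * kdelta i j + hb i j := fun i j => by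
    rw [← trl]
    exact Finset.sum_congr rfl fun r _ => (hC i j r r).2.2
  have trt : ∑ p, ∑ r, C p p r r = 3 * β := by
    simp only [trr, Fin.sum_univ_three, kdelta, if_true]
    linarith
  have D : ∀ i j k l, Cdd C i j k l = α * Jt i j k l + boxOne ha i j k l + H i j k l := by
    intro i j k l
    rw [aux_Cdd C hC, trl, trr, trt, hdec, CG]
    unfold Kt
    ring
  have P3 : ∀ j l, ∑ i, Cdd C i j i l = (5/3) * α * kdelta j l + ha j l := by
    intro j l
    have a1 := sa 1 0
    have a2 := sa 2 0
    have a3 := sa 2 1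
    have h := tH2 j l
    simp only [D, boxOne, Fin.sum_univ_three]
    fin_cases j <;> fin_cases l <;> simp [Jt, It, Kt, kdelta] at h ⊢ <;> linarith
  have P4 : ∑ i, ∑ p, Cdd C i p i p = 5 * α := by
    rw [Finset.sum_comm]
    simp only [P3, Fin.sum_univ_three, kdelta, if_true]
    linarith
  refine ⟨?_, ?_, ?_, ?_, ?_⟩
  · have e : ∀ i j, ∑ k, ∑ l, Cdd C i j k l * Jt i j k l = Cdd C i j i j := by
      intro i j
      have z : ∑ p, Cdd C i j p p = 0 := by
        simp only [aux_Cdd C hC, trl, trr, Fin.sum_univ_three]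
        have := trr i j
        simp only [Fin.sum_univ_three] at this
        simp only [kk 0 0, kk 1 1, kk 2 2, if_true]
        linear_combination this
      have s : ∀ p q, Cdd C i j p q = Cdd C i j q p := by
        intro p q
        have c : ∀ a b, C a b p q = C a b q p := fun a b => (hC a b p q).2.1
        simp only [aux_Cdd C hC, c, hka p q]
      have := aux_left (Cdd C i j) s i j
      rw [z] at this
      simp only [mul_comm (Cdd C i j _ _)]
      rw [this]
      ring
    simp only [e]
    rw [P4]
    ring
  · rw [trt]
    ring
  · intro j l
    rw [P3, P4]
    ring
  · intro i j
    rw [trr, trt]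
    ring
  · intro i j k l
    rw [D]
    ring
end

section
/- Equivariance of the Clebsch–Gordan harmonic decomposition: for every R ∈ SO(3), every α, β ∈ ℝ, hᵃ, hᵇ ∈ H² and H ∈ H⁴, the image under R of the Clebsch–Gordan combination of (α, β, hᵃ, hᵇ, H), namely R ⋆ (α J + β K + hᵃ ⊠ 1 + (1/3)(hᵇ ⊗ 1 + 1 ⊗ hᵇ) + H), equals the Clebsch–Gordan combination of (α, β, R hᵃ Rᵀ, R hᵇ Rᵀ, R ⋆ H). -/
open scoped BigOperators
open Matrix

/-- A rotation matrix: `RᵀR = 1` and `det R = 1`. -/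
def IsSO3 (R : Mat3) : Prop := Rᵀ * R = 1 ∧ R.det = 1

/-- The action `R ⋆ T` of a rotation on a fourth-order tensor. -/
noncomputable def rot4 (R : Mat3) (T : Tens4) (i j k l : Fin 3) : ℝ :=
  ∑ p, ∑ q, ∑ r, ∑ s, R i p * R j q * R k r * R l s * T p q r s

theorem cj_apply (R A : Mat3) (i j : Fin 3) :
    (R * A * Rᵀ) i j = ∑ p, ∑ q, R i p * R j q * A p q := by
  simp only [Matrix.mul_apply, Matrix.transpose_apply, Finset.sum_mul]
  rw [Finset.sum_comm]
  exact Finset.sum_congr rfl fun p _ => Finset.sum_congr rfl fun q _ => by ring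

theorem rot4_out1 (R A B : Mat3) (i j k l : Fin 3) :
    rot4 R (fun p q r s => A p q * B r s) i j k l = (R * A * Rᵀ) i j * (R * B * Rᵀ) k l := by
  simp only [cj_apply, rot4, Finset.sum_mul]
  simp only [Finset.mul_sum]
  refine Finset.sum_congr rfl fun p _ => Finset.sum_congr rfl fun q _ =>
    Finset.sum_congr rfl fun r _ => Finset.sum_congr rfl fun s _ => by ring

theorem rot4_swap23 (R : Mat3) (T : Tens4) (i j k l : Fin 3) :
    rot4 R (fun p q r s => T p r q s) i j k l = rot4 R T i k j l := by
  simp only [rot4]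
  refine Finset.sum_congr rfl fun p _ => ?_
  rw [Finset.sum_comm]
  refine Finset.sum_congr rfl fun q _ =>
    Finset.sum_congr rfl fun r _ => Finset.sum_congr rfl fun s _ => by ring

theorem rot4_swap34 (R : Mat3) (T : Tens4) (i j k l : Fin 3) :
    rot4 R (fun p q r s => T p q s r) i j k l = rot4 R T i j l k := by
  simp only [rot4]
  refine Finset.sum_congr rfl fun p _ => Finset.sum_congr rfl fun q _ => ?_
  rw [Finset.sum_comm]
  refine Finset.sum_congr rfl fun r _ => Finset.sum_congr rfl fun s _ => by ring

theorem rot4_out2 (R A B : Mat3) (i j k l : Fin 3) :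
    rot4 R (fun p q r s => A p r * B q s) i j k l = (R * A * Rᵀ) i k * (R * B * Rᵀ) j l := by
  rw [rot4_swap23 R (fun p q r s => A p q * B r s), rot4_out1]

theorem rot4_out3 (R A B : Mat3) (i j k l : Fin 3) :
    rot4 R (fun p q r s => A p s * B q r) i j k l = (R * A * Rᵀ) i l * (R * B * Rᵀ) j k := by
  rw [rot4_swap34 R (fun p q r s => A p r * B q s), rot4_out2]

theorem rot4_add (R : Mat3) (S T : Tens4) (i j k l : Fin 3) :
    rot4 R (fun p q r s => S p q r s + T p q r s) i j k l
      = rot4 R S i j k l + rot4 R T i j k l := by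
  simp only [rot4, mul_add, Finset.sum_add_distrib]

theorem rot4_smul (R : Mat3) (c : ℝ) (T : Tens4) (i j k l : Fin 3) :
    rot4 R (fun p q r s => c * T p q r s) i j k l = c * rot4 R T i j k l := by
  simp only [rot4, Finset.mul_sum]
  refine Finset.sum_congr rfl fun p _ => Finset.sum_congr rfl fun q _ =>
    Finset.sum_congr rfl fun r _ => Finset.sum_congr rfl fun s _ => by ring

theorem rot4_sub (R : Mat3) (S T : Tens4) (i j k l : Fin 3) :
    rot4 R (fun p q r s => S p q r s - T p q r s) i j k l
      = rot4 R S i j k l - rot4 R T i j k l := by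
  simp only [rot4, mul_sub, Finset.sum_sub_distrib]

/-- Equivariance of the Clebsch–Gordan harmonic decomposition. -/
theorem cg_equivariant (R : Mat3) (hR : IsSO3 R) (α β : ℝ) (ha hb : Mat3) (H : Tens4)
    (hha : IsH2 ha) (hhb : IsH2 hb) (hH : IsH4 H) :
    ∀ i j k l, rot4 R (CG α β ha hb H) i j k l =
      CG α β (R * ha * Rᵀ) (R * hb * Rᵀ) (rot4 R H) i j k l := by
  intro i j k l
  have hk : ∀ a b, kdelta a b = (1 : Mat3) a b := fun a b => by
    simp [kdelta, Matrix.one_apply]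
  have h1 : R * 1 * Rᵀ = 1 := by
    rw [mul_one]; exact mul_eq_one_comm.mp hR.1
  have e : CG α β ha hb H = fun i j k l => CG α β ha hb H i j k l := rfl
  rw [e]
  simp only [CG, Jt, It, Kt, boxOne, hk, mul_assoc (1/3 : ℝ)]
  simp only [rot4_add, rot4_sub, rot4_smul]
  simp only [rot4_out1, rot4_out2, rot4_out3, h1]
end

section
/- Schur–Weyl splitting of an elasticity tensor: for every C ∈ Ela, the tensor C^s with components C^s_ijkl = (1/3)(C_ijkl + C_ikjl + C_iljk) is totally symmetric (invariant under every permutation of the four indices); moreover, the splitting is orthogonal: for all C, D ∈ Ela one has ∑_{i,j,k,l} C^s_ijkl · (D_ijkl − D^s_ijkl) = 0, where D^s_ijkl = (1/3)(D_ijkl + D_ikjl + D_iljk). -/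
open scoped BigOperators

/-- The totally symmetric part `C^s` of an elasticity tensor. -/
noncomputable def Csym (C : Tens4) (i j k l : Fin 3) : ℝ :=
  (1/3) * (C i j k l + C i k j l + C i l j k)

lemma Csym_s12 (C : Tens4) (hC : IsEla C) (i j k l : Fin 3) :
    Csym C j i k l = Csym C i j k l := by
  unfold Csym
  have h1 := (hC j i k l).1
  have h2 : C j k i l = C i l j k := (hC j k i l).2.2
  have h3 : C j l i k = C i k j l := (hC j l i k).2.2
  linarith

lemma Csym_s23 (C : Tens4) (hC : IsEla C) (i j k l : Fin 3) :
    Csym C i k j l = Csym C i j k l := by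
  unfold Csym
  have h1 := (hC i l j k).2.1
  linarith

lemma Csym_s34 (C : Tens4) (hC : IsEla C) (i j k l : Fin 3) :
    Csym C i j l k = Csym C i j k l := by
  unfold Csym
  have h1 := (hC i j k l).2.1
  linarith

lemma Csym_swap (C : Tens4) (hC : IsEla C) (x y : Fin 4) (f : Fin 4 → Fin 3) :
    Csym C (f (Equiv.swap x y 0)) (f (Equiv.swap x y 1)) (f (Equiv.swap x y 2))
      (f (Equiv.swap x y 3)) = Csym C (f 0) (f 1) (f 2) (f 3) := by
  have a := Csym_s12 C hC
  have b := Csym_s23 C hC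
  have c := Csym_s34 C hC
  have h13 : ∀ i j k l, Csym C k j i l = Csym C i j k l := fun i j k l => by
    rw [a, b, a]
  have h24 : ∀ i j k l, Csym C i l k j = Csym C i j k l := fun i j k l => by
    rw [b, c, b]
  have h14 : ∀ i j k l, Csym C l j k i = Csym C i j k l := fun i j k l => by
    rw [a, h24, a]
  fin_cases x <;> fin_cases y <;> simp [Equiv.swap_apply_def] <;>
    first | apply a | apply b | apply c | apply h13 | apply h24 | apply h14

/-- Schur–Weyl splitting of an elasticity tensor: `C^s` is totally symmetric, and the
splitting `C = C^s + (C - C^s)` is orthogonal. -/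
theorem schurWeyl_splitting (C : Tens4) (hC : IsEla C) :
    (∀ (σ : Equiv.Perm (Fin 4)) (f : Fin 4 → Fin 3),
        Csym C (f (σ 0)) (f (σ 1)) (f (σ 2)) (f (σ 3)) = Csym C (f 0) (f 1) (f 2) (f 3)) ∧
    (∀ D : Tens4, IsEla D →
        ∑ i, ∑ j, ∑ k, ∑ l, Csym C i j k l * (D i j k l - Csym D i j k l) = 0) := by
  constructor
  · intro σ
    induction σ using Equiv.Perm.swap_induction_on with
    | one => intro f; rfl
    | swap_mul σ x y _ ih =>
      intro f
      have h := ih (fun i => f (Equiv.swap x y i))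
      exact h.trans (Csym_swap C hC x y f)
  · intro D _
    have e1 : ∑ i, ∑ j, ∑ k, ∑ l, Csym C i j k l * D i k j l
        = ∑ i, ∑ j, ∑ k, ∑ l, Csym C i j k l * D i j k l := by
      refine Finset.sum_congr rfl fun i _ => ?_
      rw [Finset.sum_comm]
      simp only [Csym_s23 C hC i]
    have e2 : ∑ i, ∑ j, ∑ k, ∑ l, Csym C i j k l * D i l j k
        = ∑ i, ∑ j, ∑ k, ∑ l, Csym C i j k l * D i j k l := by
      refine Finset.sum_congr rfl fun i _ => ?_
      have h : ∀ j, ∑ k, ∑ l, Csym C i j k l * D i l j k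
          = ∑ l, ∑ k, Csym C i l j k * D i l j k := fun j => by
        rw [Finset.sum_comm]
        refine Finset.sum_congr rfl fun l _ => Finset.sum_congr rfl fun k _ => ?_
        rw [Csym_s23 C hC i j l k, Csym_s34 C hC i j k l]
      simp only [h]
      rw [Finset.sum_comm]
    have e3 : ∀ i j k l, Csym C i j k l * (D i j k l - Csym D i j k l)
        = (2/3) * (Csym C i j k l * D i j k l) - (1/3) * (Csym C i j k l * D i k j l)
          - (1/3) * (Csym C i j k l * D i l j k) := fun i j k l => by
      rw [Csym.eq_1 D]; ring
    simp only [e3, Finset.sum_sub_distrib, ← Finset.mul_sum]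
    rw [e1, e2]; ring
end

section
/- Existence and uniqueness of the Schur–Weyl harmonic decomposition: for every elasticity tensor C ∈ Ela there exists exactly one quintuple (α, β, hᵃ, hᵇ, H) with α, β ∈ ℝ, hᵃ, hᵇ ∈ H², H ∈ H⁴ such that C = α(1 ⊗₍₂,₂₎ 1) + β(1 ⊗₍₄₎ 1) + hᵃ ⊗₍₂,₂₎ 1 + hᵇ ⊗₍₄₎ 1 + H (componentwise equality of fourth-order tensors). -/
open scoped BigOperators

/-- Totally symmetrised tensor product `t₁ ⊗₍₄₎ t₂`. -/
noncomputable def prod4 (t1 t2 : Mat3) (i j k l : Fin 3) : ℝ :=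
  (1/6) * (t1 i j * t2 k l + t2 i j * t1 k l + t1 i k * t2 j l + t1 i l * t2 j k
    + t2 i k * t1 j l + t2 i l * t1 j k)

/-- Tensor product `t₁ ⊗₍₂,₂₎ t₂`. -/
noncomputable def prod22 (t1 t2 : Mat3) (i j k l : Fin 3) : ℝ :=
  (1/3) * (t1 i j * t2 k l + t2 i j * t1 k l
    - (1/2) * (t1 i k * t2 j l + t1 i l * t2 j k + t2 i k * t1 j l + t2 i l * t1 j k))

/-- The Schur–Weyl combination of `(α, β, hᵃ, hᵇ, H)`. -/
noncomputable def SW (α β : ℝ) (ha hb : Mat3) (H : Tens4) (i j k l : Fin 3) : ℝ :=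
  α * prod22 1 1 i j k l + β * prod4 1 1 i j k l + prod22 ha 1 i j k l
    + prod4 hb 1 i j k l + H i j k l

lemma sw_perm (H : Tens4) (h1 : ∀ i j k l, H j i k l = H i j k l)
    (h2 : ∀ i j k l, H i k j l = H i j k l) (h3 : ∀ i j k l, H i j l k = H i j k l)
    (σ : Equiv.Perm (Fin 4)) : ∀ f : Fin 4 → Fin 3,
      H (f (σ 0)) (f (σ 1)) (f (σ 2)) (f (σ 3)) = H (f 0) (f 1) (f 2) (f 3) := by
  have hm : σ ∈ Submonoid.closure
      (Set.range fun i : Fin 3 ↦ Equiv.swap i.castSucc i.succ) := by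
    rw [Equiv.Perm.mclosure_swap_castSucc_succ]; trivial
  induction hm using Submonoid.closure_induction with
  | mem x hx =>
    obtain ⟨i, rfl⟩ := hx
    intro f
    fin_cases i
    · exact h1 _ _ _ _
    · exact h2 _ _ _ _
    · exact h3 _ _ _ _
  | one => intro f; rfl
  | mul x y _ _ hx hy =>
    intro f
    exact (hy (fun a => f (x a))).trans (hx f)

noncomputable def swD (C : Tens4) (k l : Fin 3) : ℝ := C 0 0 k l + C 1 1 k l + C 2 2 k l
noncomputable def swV (C : Tens4) (k l : Fin 3) : ℝ := C 0 k 0 l + C 1 k 1 l + C 2 k 2 l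
noncomputable def swTD (C : Tens4) : ℝ := swD C 0 0 + swD C 1 1 + swD C 2 2
noncomputable def swTV (C : Tens4) : ℝ := swV C 0 0 + swV C 1 1 + swV C 2 2
noncomputable def swA (C : Tens4) : ℝ := (swTD C - swTV C) / 6
noncomputable def swB (C : Tens4) : ℝ := (swTD C + 2 * swTV C) / 15
noncomputable def swHa (C : Tens4) : Mat3 := fun k l =>
  2 * (swD C k l - swV C k l) - 2 / 3 * (swTD C - swTV C) * (1 : Mat3) k l
noncomputable def swHb (C : Tens4) : Mat3 := fun k l =>
  6 / 7 * ((swD C k l + 2 * swV C k l) / 3 - (swTD C + 2 * swTV C) / 9 * (1 : Mat3) k l)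
noncomputable def swH (C : Tens4) : Tens4 := fun i j k l =>
  (C i j k l + C i k j l + C i l j k) / 3 - swB C * prod4 1 1 i j k l
    - prod4 (swHb C) 1 i j k l

lemma swV_symm (C : Tens4) (hC : IsEla C) (k l : Fin 3) : swV C k l = swV C l k := by
  simp only [swV, fun i => (hC i k i l).2.2]

lemma swD_symm (C : Tens4) (hC : IsEla C) (k l : Fin 3) : swD C k l = swD C l k := by
  simp only [swD, fun i => (hC i i k l).2.1]

lemma one3_symm (k l : Fin 3) : (1 : Mat3) k l = (1 : Mat3) l k := by
  simp only [Matrix.one_apply, eq_comm]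

lemma swHa_symm (C : Tens4) (hC : IsEla C) (k l : Fin 3) : swHa C k l = swHa C l k := by
  simp only [swHa, swV_symm C hC k l, swD_symm C hC k l, one3_symm k l]

lemma swHb_symm (C : Tens4) (hC : IsEla C) (k l : Fin 3) : swHb C k l = swHb C l k := by
  simp only [swHb, swV_symm C hC k l, swD_symm C hC k l, one3_symm k l]

lemma prod4_symm (s t : Mat3) (hs : ∀ i j, s i j = s j i) (ht : ∀ i j, t i j = t j i)
    (i j k l : Fin 3) : prod4 s t j i k l = prod4 s t i j k l ∧
      prod4 s t i k j l = prod4 s t i j k l ∧ prod4 s t i j l k = prod4 s t i j k l := by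
  simp only [prod4]
  refine ⟨?_, ?_, ?_⟩
  · rw [hs j i, ht j i]; ring
  · rw [hs k j, ht k j]; ring
  · rw [hs l k, ht l k]; ring

lemma swH_symm (C : Tens4) (hC : IsEla C) (i j k l : Fin 3) :
    swH C j i k l = swH C i j k l ∧
      swH C i k j l = swH C i j k l ∧ swH C i j l k = swH C i j k l := by
  have a := prod4_symm 1 1 one3_symm one3_symm i j k l
  have b := prod4_symm (swHb C) 1 (swHb_symm C hC) one3_symm i j k l
  simp only [swH, a.1, a.2.1, a.2.2, b.1, b.2.1, b.2.2]
  refine ⟨?_, ?_, ?_⟩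
  · rw [(hC j i k l).1, (hC j k i l).2.2, (hC i l j k).2.2, (hC j k i l).2.2,
      (hC j l i k).2.2]; ring
  · rw [(hC i l k j).2.1]; ring
  · rw [(hC i j l k).2.1]; ring

lemma swMain (C : Tens4) (hC : IsEla C) (i j k l : Fin 3) :
    C i j k l = SW (swA C) (swB C) (swHa C) (swHb C) (swH C) i j k l := by
  have a1 := fun k l => (hC 1 0 k l).1
  have a2 := fun k l => (hC 2 0 k l).1
  have a3 := fun k l => (hC 2 1 k l).1
  have b1 := fun k l => (hC k l 1 0).2.1
  have b2 := fun k l => (hC k l 2 0).2.1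
  have b3 := fun k l => (hC k l 2 1).2.1
  have c1 := (hC 1 1 0 0).2.2
  have c2 := (hC 2 2 0 0).2.2
  have c3 := (hC 2 2 1 1).2.2
  have d1 := fun i => (hC 0 1 i i).2.2
  have d2 := fun i => (hC 0 2 i i).2.2
  have d3 := fun i => (hC 1 2 i i).2.2
  have e1 := (hC 0 2 0 1).2.2
  have e2 := (hC 1 2 0 1).2.2
  have e3 := (hC 1 2 0 2).2.2
  simp only [SW, swH, swA, prod22, prod4, swHa, swTD, swTV, swD, swV]
  fin_cases i <;> fin_cases j <;> fin_cases k <;> fin_cases l <;>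
    simp [Matrix.one_apply, a1, a2, a3, b1, b2, b3, c1, c2, c3, d1, d2, d3, e1, e2, e3] <;> ring

lemma swH_trace (C : Tens4) (hC : IsEla C) (k l : Fin 3) : ∑ i, swH C i i k l = 0 := by
  have a1 := fun k l => (hC 1 0 k l).1
  have a2 := fun k l => (hC 2 0 k l).1
  have a3 := fun k l => (hC 2 1 k l).1
  have b1 := fun k l => (hC k l 1 0).2.1
  have b2 := fun k l => (hC k l 2 0).2.1
  have b3 := fun k l => (hC k l 2 1).2.1
  have c1 := (hC 1 1 0 0).2.2
  have c2 := (hC 2 2 0 0).2.2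
  have c3 := (hC 2 2 1 1).2.2
  have d1 := fun i => (hC 0 1 i i).2.2
  have d2 := fun i => (hC 0 2 i i).2.2
  have d3 := fun i => (hC 1 2 i i).2.2
  have e1 := (hC 0 2 0 1).2.2
  have e2 := (hC 1 2 0 1).2.2
  have e3 := (hC 1 2 0 2).2.2
  simp only [Fin.sum_univ_three, swH, swB, prod4, swHb, swTD, swTV, swD, swV]
  fin_cases k <;> fin_cases l <;>
    simp [Matrix.one_apply, a1, a2, a3, b1, b2, b3, c1, c2, c3, d1, d2, d3, e1, e2, e3] <;> ring

lemma sw_uniq (C : Tens4) (α β : ℝ) (ha hb : Mat3) (H : Tens4) (h1 : IsH2 ha) (h2 : IsH2 hb)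
    (h3 : IsH4 H) (h : ∀ i j k l, C i j k l = SW α β ha hb H i j k l) :
    α = swA C ∧ β = swB C ∧ ha = swHa C ∧ hb = swHb C := by
  have t1 : ha 0 0 + ha 1 1 + ha 2 2 = 0 := by
    simpa [Matrix.trace, Fin.sum_univ_three] using h1.2
  have t2 : hb 0 0 + hb 1 1 + hb 2 2 = 0 := by
    simpa [Matrix.trace, Fin.sum_univ_three] using h2.2
  have s1 : ∀ i j, ha j i = ha i j := fun i j => h1.1.apply i j
  have s2 : ∀ i j, hb j i = hb i j := fun i j => h2.1.apply i j
  have hT : ∀ k l, H 0 0 k l + H 1 1 k l + H 2 2 k l = 0 := fun k l => by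
    simpa [Fin.sum_univ_three] using h3.2 k l
  have hp : ∀ i j k l, H i k j l = H i j k l := fun i j k l =>
    h3.1 (Equiv.swap 1 2) ![i, j, k, l]
  have hD : ∀ k l, swD C k l = (4/3 * α + 5/3 * β) * (1 : Mat3) k l
      + 1/3 * ha k l + 7/6 * hb k l := by
    intro k l
    have := hT k l
    simp only [swD, h, SW, prod22, prod4]
    fin_cases k <;> fin_cases l <;> 
      simp [Matrix.one_apply, s1 0 1, s1 0 2, s1 1 2, s2 0 1, s2 0 2, s2 1 2] at this ⊢ <;> linarith
  have hV : ∀ k l, swV C k l = (-2/3 * α + 5/3 * β) * (1 : Mat3) k l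
      - 1/6 * ha k l + 7/6 * hb k l := by
    intro k l
    have := hT k l
    simp only [swV, h, SW, prod22, prod4, hp 0 0 k, hp 1 1 k, hp 2 2 k]
    fin_cases k <;> fin_cases l <;> 
      simp [Matrix.one_apply, s1 0 1, s1 0 2, s1 1 2, s2 0 1, s2 0 2, s2 1 2] at this ⊢ <;> linarith
  have hTD : swTD C = 4 * α + 5 * β := by
    simp only [swTD, hD, Matrix.one_apply_eq]; linarith
  have hTV : swTV C = -2 * α + 5 * β := by
    simp only [swTV, hV, Matrix.one_apply_eq]; linarith
  refine ⟨?_, ?_, ?_, ?_⟩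
  · rw [swA, hTD, hTV]; ring
  · rw [swB, hTD, hTV]; ring
  · ext k l; rw [swHa, hTD, hTV, hD, hV]; ring
  · ext k l; rw [swHb, hTD, hTV, hD, hV]; ring

/-- Existence and uniqueness of the Schur–Weyl harmonic decomposition. -/
theorem sw_decomposition_existsUnique (C : Tens4) (hC : IsEla C) :
    ∃! q : ℝ × ℝ × Mat3 × Mat3 × Tens4,
      IsH2 q.2.2.1 ∧ IsH2 q.2.2.2.1 ∧ IsH4 q.2.2.2.2 ∧
      ∀ i j k l, C i j k l = SW q.1 q.2.1 q.2.2.1 q.2.2.2.1 q.2.2.2.2 i j k l := by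
  refine ⟨(swA C, swB C, swHa C, swHb C, swH C), ⟨⟨?_, ?_⟩, ⟨?_, ?_⟩, ⟨?_, ?_⟩, ?_⟩, ?_⟩
  · exact Matrix.IsSymm.ext fun i j => swHa_symm C hC j i
  · simp only [Matrix.trace, Matrix.diag, Fin.sum_univ_three, swHa, swTD, swTV,
      Matrix.one_apply_eq]; ring
  · exact Matrix.IsSymm.ext fun i j => swHb_symm C hC j i
  · simp only [Matrix.trace, Matrix.diag, Fin.sum_univ_three, swHb, swTD, swTV,
      Matrix.one_apply_eq]; ring
  · exact sw_perm _ (fun i j k l => (swH_symm C hC i j k l).1)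
      (fun i j k l => (swH_symm C hC i j k l).2.1) (fun i j k l => (swH_symm C hC i j k l).2.2)
  · exact swH_trace C hC
  · exact swMain C hC
  · rintro ⟨α, β, ha, hb, H⟩ ⟨h1, h2, h3, h⟩
    obtain ⟨rfl, rfl, rfl, rfl⟩ := sw_uniq C α β ha hb H h1 h2 h3 h
    have : H = swH C := by
      funext i j k l
      have e1 := h i j k l
      have e2 := swMain C hC i j k l
      simp only [SW] at e1 e2
      linarith
    rw [this]
end

section
/- Recovery formulas for the Schur–Weyl harmonic decomposition: suppose C ∈ Ela equals α(1 ⊗₍₂,₂₎ 1) + β(1 ⊗₍₄₎ 1) + hᵃ ⊗₍₂,₂₎ 1 + hᵇ ⊗₍₄₎ 1 + H with α, β ∈ ℝ, hᵃ, hᵇ ∈ H², H ∈ H⁴. Let C^s_ijkl = (1/3)(C_ijkl + C_ikjl + C_iljk) and C^a = C − C^s. Then α = (1/4) ∑_{i,j} C^a_iijj, β = (1/5) ∑_{i,j} C^s_iijj, hᵃ_kl = 3(∑_i C^a_iikl − (4/3) α δ_kl), hᵇ_kl = (6/7)(∑_i C^s_iikl − (5/3) β δ_kl), and H = C^s − hᵇ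 ⊗₍₄₎ 1 − β(1 ⊗₍₄₎ 1). -/
open scoped BigOperators

/-- The asymmetric part `C^a = C - C^s`. -/
noncomputable def Casym (C : Tens4) (i j k l : Fin 3) : ℝ :=
  C i j k l - Csym C i j k l

theorem IsH4.swap {H : Tens4} (hH : IsH4 H) (i j k l : Fin 3) : H i k j l = H i j k l := by
  have h := hH.1 (Equiv.swap 1 2) ![i, j, k, l]
  have e0 : (Equiv.swap (1 : Fin 4) 2) 0 = 0 := by decide
  have e1 : (Equiv.swap (1 : Fin 4) 2) 1 = 2 := by decide
  have e2 : (Equiv.swap (1 : Fin 4) 2) 2 = 1 := by decide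
  have e3 : (Equiv.swap (1 : Fin 4) 2) 3 = 3 := by decide
  rw [e0, e1, e2, e3] at h
  simpa using h

theorem IsH4.swap_last {H : Tens4} (hH : IsH4 H) (i j k l : Fin 3) : H i j l k = H i j k l := by
  have h := hH.1 (Equiv.swap 2 3) ![i, j, k, l]
  have e0 : (Equiv.swap (2 : Fin 4) 3) 0 = 0 := by decide
  have e1 : (Equiv.swap (2 : Fin 4) 3) 1 = 1 := by decide
  have e2 : (Equiv.swap (2 : Fin 4) 3) 2 = 3 := by decide
  have e3 : (Equiv.swap (2 : Fin 4) 3) 3 = 2 := by decide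
  rw [e0, e1, e2, e3] at h
  simpa using h

/-- Recovery formulas for the Schur–Weyl harmonic decomposition. -/
theorem sw_recovery (C : Tens4) (hC : IsEla C) (α β : ℝ) (ha hb : Mat3) (H : Tens4)
    (hha : IsH2 ha) (hhb : IsH2 hb) (hH : IsH4 H)
    (hdec : ∀ i j k l, C i j k l = SW α β ha hb H i j k l) :
    α = (1/4) * ∑ i, ∑ j, Casym C i i j j ∧
    β = (1/5) * ∑ i, ∑ j, Csym C i i j j ∧
    (∀ k l, ha k l = 3 * ((∑ i, Casym C i i k l) - (4/3) * α * kdelta k l)) ∧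
    (∀ k l, hb k l = (6/7) * ((∑ i, Csym C i i k l) - (5/3) * β * kdelta k l)) ∧
    (∀ i j k l, H i j k l = Csym C i j k l - prod4 hb 1 i j k l - β * prod4 1 1 i j k l) := by
  have hs : ∀ i j k l, Csym C i j k l
      = prod4 hb 1 i j k l + β * prod4 1 1 i j k l + H i j k l := by
    intro i j k l
    have a1 := hH.swap i j k l
    have a2 : H i l j k = H i j k l := by rw [hH.swap i j l k, hH.swap_last]
    have s1 : ∀ i j, ha j i = ha i j := fun i j => hha.1.apply i j
    have s2 : ∀ i j, hb j i = hb i j := fun i j => hhb.1.apply i j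
    have s3 : ∀ i j, (1 : Mat3) j i = (1 : Mat3) i j :=
      fun i j => (Matrix.isSymm_one (n := Fin 3) (α := ℝ)).apply i j
    simp only [Csym, hdec, SW, prod4, prod22, a1, a2]
    rw [s1 j k, s1 j l, s1 k l, s2 j k, s2 j l, s2 k l, s3 j k, s3 j l, s3 k l]
    ring
  have hq : ∀ i j k l, Casym C i j k l = α * prod22 1 1 i j k l + prod22 ha 1 i j k l := by
    intro i j k l
    simp only [Casym, hs, hdec, SW]
    ring
  have ta : ha 0 0 + ha 1 1 + ha 2 2 = 0 := by
    have := hha.2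
    rwa [Matrix.trace_fin_three] at this
  have tb : hb 0 0 + hb 1 1 + hb 2 2 = 0 := by
    have := hhb.2
    rwa [Matrix.trace_fin_three] at this
  have TA : ∀ k l, ∑ i, Casym C i i k l = (4/3) * α * kdelta k l + ha k l / 3 := by
    intro k l
    have s := hha.1.apply k l
    have s01 := hha.1.apply 0 1
    have s02 := hha.1.apply 0 2
    have s12 := hha.1.apply 1 2
    simp only [hq, Fin.sum_univ_three, prod22, kdelta]
    fin_cases k <;> fin_cases l <;> simp [Matrix.one_apply] <;> linarith
  have TS : ∀ k l, ∑ i, Csym C i i k l = (5/3) * β * kdelta k l + (7/6) * hb k l := by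
    intro k l
    have t := hH.2 k l
    have s01 := hhb.1.apply 0 1
    have s02 := hhb.1.apply 0 2
    have s12 := hhb.1.apply 1 2
    simp only [hs, Finset.sum_add_distrib, t]
    simp only [Fin.sum_univ_three, prod4, kdelta]
    clear t
    fin_cases k <;> fin_cases l <;> simp [Matrix.one_apply] <;> linarith
  refine ⟨?_, ?_, ?_, ?_, ?_⟩
  · rw [Finset.sum_comm]
    simp only [TA]
    simp [Fin.sum_univ_three, kdelta]
    linarith
  · rw [Finset.sum_comm]
    simp only [TS]
    simp [Fin.sum_univ_three, kdelta]
    linarith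
  · intro k l
    rw [TA]
    ring
  · intro k l
    rw [TS]
    ring
  · intro i j k l
    rw [hs]
    ring
end

section
/- Symmetry of a rank-one deviator: let n ∈ ℝ³ be a unit vector (∑ᵢ nᵢ² = 1) and let h = n nᵀ − (1/3)·1 (where n nᵀ is the matrix with entries nᵢ nⱼ and 1 is the 3×3 identity). Then for every R ∈ SO(3), R h Rᵀ = h if and only if R n = n or R n = −n. -/
open scoped BigOperators
open Matrix

/-- The rank-one deviator `n nᵀ - (1/3)·1` associated with a vector `n`. -/
noncomputable def devRank1 (n : Fin 3 → ℝ) : Mat3 :=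
  Matrix.vecMulVec n n - (1/3 : ℝ) • 1

/-- Symmetry of a rank-one deviator: a rotation preserves `n nᵀ - (1/3)·1` iff it
fixes `n` up to sign. -/
theorem rank_one_deviator_symmetry (n : Fin 3 → ℝ) (hn : ∑ i, n i ^ 2 = 1)
    (R : Mat3) (hR : IsSO3 R) :
    R * devRank1 n * Rᵀ = devRank1 n ↔ R.mulVec n = n ∨ R.mulVec n = -n := by
  obtain ⟨h1, -⟩ := hR
  have h2 : R * Rᵀ = 1 := mul_eq_one_comm.mp h1
  have key : R * devRank1 n * Rᵀ =
      Matrix.vecMulVec (R.mulVec n) (R.mulVec n) - (1/3 : ℝ) • 1 := by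
    unfold devRank1
    rw [Matrix.mul_sub, Matrix.sub_mul, Matrix.mul_smul, Matrix.smul_mul, Matrix.mul_one, h2,
      Matrix.mul_vecMulVec, Matrix.vecMulVec_mul, Matrix.vecMul_transpose]
  rw [key]
  generalize R.mulVec n = m
  unfold devRank1
  rw [sub_left_inj]
  constructor
  · intro h
    have e : ∀ i j, m i * m j = n i * n j := fun i j => by
      have := congrFun (congrFun h i) j
      simpa [Matrix.vecMulVec_apply] using this
    have hs : ∀ i, (∑ j, m j * n j) * m i = n i := fun i => by
      calc (∑ j, m j * n j) * m i = ∑ j, (m i * m j) * n j := by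
            rw [Finset.sum_mul]; exact Finset.sum_congr rfl fun j _ => by ring
        _ = n i * ∑ j, n j ^ 2 := by
            rw [Finset.mul_sum]; exact Finset.sum_congr rfl fun j _ => by rw [e]; ring
        _ = n i := by rw [hn, mul_one]
    have hq : (∑ j, m j * n j) * (∑ j, m j * n j) = 1 := by
      calc _ = ∑ j, ((∑ j, m j * n j) * m j) * n j := by
            rw [Finset.mul_sum]; exact Finset.sum_congr rfl fun j _ => by ring
        _ = 1 := by
            rw [← hn]; exact Finset.sum_congr rfl fun j _ => by rw [hs]; ring
    rcases mul_self_eq_one_iff.mp hq with q | q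
    · left; ext i; have := hs i; rw [q] at this; linarith
    · right; ext i; have := hs i; rw [q] at this; simp only [Pi.neg_apply]; linarith
  · rintro (h | h)
    · rw [h]
    · rw [h]; ext i j; simp [Matrix.vecMulVec_apply]
end

section
/- Axis-determination lemma: let k, n ∈ ℝ³ be unit vectors (∑ᵢ kᵢ² = ∑ᵢ nᵢ² = 1). If every R ∈ SO(3) with R k = k satisfies R (n nᵀ − (1/3)·1) Rᵀ = n nᵀ − (1/3)·1, then n = k or n = −k. -/
open scoped BigOperators
open Matrix

/-- Axis-determination lemma: if every rotation fixing `k` preserves the rank-one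
deviator of `n`, then `n = ±k`. -/
theorem axis_determination (k n : Fin 3 → ℝ) (hk : ∑ i, k i ^ 2 = 1)
    (hn : ∑ i, n i ^ 2 = 1)
    (hfix : ∀ R : Mat3, IsSO3 R → R.mulVec k = k → R * devRank1 n * Rᵀ = devRank1 n) :
    n = k ∨ n = -k := by
  obtain ⟨a, b, c, rfl⟩ : ∃ a b c, k = ![a, b, c] :=
    ⟨k 0, k 1, k 2, by ext i; fin_cases i <;> rfl⟩
  obtain ⟨x, y, z, rfl⟩ : ∃ x y z, n = ![x, y, z] :=
    ⟨n 0, n 1, n 2, by ext i; fin_cases i <;> rfl⟩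
  simp [Fin.sum_univ_three] at hk hn
  let R : Mat3 := !![a*a, a*b-c, a*c+b; a*b+c, b*b, b*c-a; a*c-b, b*c+a, c*c]
  have h1 : Rᵀ * R = 1 := by
    ext i j
    fin_cases i <;> fin_cases j <;>
      simp [R, Matrix.mul_apply, Fin.sum_univ_three]
    · linear_combination (a^2+1) * hk
    · linear_combination (a*b) * hk
    · linear_combination (a*c) * hk
    · linear_combination (a*b) * hk
    · linear_combination (b^2+1) * hk
    · linear_combination (b*c) * hk
    · linear_combination (a*c) * hk
    · linear_combination (b*c) * hk
    · linear_combination (c^2+1) * hk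
  have h2 : R.det = 1 := by
    simp [R, Matrix.det_fin_three]
    linear_combination (a^2+b^2+c^2+1) * hk
  have h3 : R.mulVec ![a,b,c] = ![a,b,c] := by
    ext i
    fin_cases i <;> simp [R, Matrix.mulVec, dotProduct, Fin.sum_univ_three]
    · linear_combination a * hk
    · linear_combination b * hk
    · linear_combination c * hk
  have h4 := hfix R ⟨h1, h2⟩ h3
  have h5 : R * Rᵀ = 1 := mul_eq_one_comm.mp h1
  have h6 : R * vecMulVec ![x,y,z] ![x,y,z] * Rᵀ = vecMulVec ![x,y,z] ![x,y,z] := by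
    simpa [devRank1, mul_sub, sub_mul, h5] using h4
  have e (i j) := congrFun (congrFun h6 i) j
  have e00 := e 0 0
  have e01 := e 0 1
  have e02 := e 0 2
  have e11 := e 1 1
  have e12 := e 1 2
  have e22 := e 2 2
  clear e h6 h4 h5 hfix h1 h2 h3
  simp [R, Matrix.mul_apply, Fin.sum_univ_three, vecMulVec_apply, vecHead, vecTail] at e00 e01 e02 e11 e12 e22
  obtain ⟨p, hp⟩ : ∃ p, p = a*a*x + (a*b-c)*y + (a*c+b)*z := ⟨_, rfl⟩
  obtain ⟨q, hq⟩ : ∃ q, q = (a*b+c)*x + b*b*y + (b*c-a)*z := ⟨_, rfl⟩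
  obtain ⟨r, hr⟩ : ∃ r, r = (a*c-b)*x + (b*c+a)*y + c*c*z := ⟨_, rfl⟩
  have f00 : p*p = x*x := by rw [hp]; linear_combination e00
  have f01 : p*q = x*y := by rw [hp, hq]; linear_combination e01
  have f02 : p*r = x*z := by rw [hp, hr]; linear_combination e02
  have f11 : q*q = y*y := by rw [hq]; linear_combination e11
  have f12 : q*r = y*z := by rw [hq, hr]; linear_combination e12
  have f22 : r*r = z*z := by rw [hr]; linear_combination e22
  have g : x*p + y*q + z*r = (a*x+b*y+c*z)^2 := by rw [hp, hq, hr]; ring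
  clear e00 e01 e02 e11 e12 e22 hp hq hr
  have h7 : (x*p + y*q + z*r)^2 = 1 := by
    linear_combination x*x*f00 + 2*x*y*f01 + 2*x*z*f02 + y*y*f11 + 2*y*z*f12 + z*z*f22 + (x^2+y^2+z^2+1) * hn
  clear f00 f01 f02 f11 f12 f22
  rw [g] at h7
  clear g R
  have h8 : (a*x+b*y+c*z)^2 = 1 := by
    generalize a*x+b*y+c*z = s at h7 ⊢
    nlinarith [sq_nonneg s]
  have h9 : (a*x+b*y+c*z - 1) * (a*x+b*y+c*z + 1) = 0 := by linear_combination h8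
  rcases mul_eq_zero.mp h9 with h | h
  · left
    have s : (x-a)^2 + (y-b)^2 + (z-c)^2 = 0 := by linear_combination hk + hn - 2*h
    have p : x = a := by
      have : (x-a)^2 = 0 := by nlinarith [sq_nonneg (x-a), sq_nonneg (y-b), sq_nonneg (z-c)]
      have := pow_eq_zero_iff (two_ne_zero) |>.mp this
      linarith
    have q : y = b := by
      have : (y-b)^2 = 0 := by nlinarith [sq_nonneg (x-a), sq_nonneg (y-b), sq_nonneg (z-c)]
      have := pow_eq_zero_iff (two_ne_zero) |>.mp this
      linarith
    have r : z = c := by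
      have : (z-c)^2 = 0 := by nlinarith [sq_nonneg (x-a), sq_nonneg (y-b), sq_nonneg (z-c)]
      have := pow_eq_zero_iff (two_ne_zero) |>.mp this
      linarith
    rw [p, q, r]
  · right
    have s : (x+a)^2 + (y+b)^2 + (z+c)^2 = 0 := by linear_combination hk + hn + 2*h
    have p : x = -a := by
      have : (x+a)^2 = 0 := by nlinarith [sq_nonneg (x+a), sq_nonneg (y+b), sq_nonneg (z+c)]
      have := pow_eq_zero_iff (two_ne_zero) |>.mp this
      linarith
    have q : y = -b := by
      have : (y+b)^2 = 0 := by nlinarith [sq_nonneg (x+a), sq_nonneg (y+b), sq_nonneg (z+c)]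
      have := pow_eq_zero_iff (two_ne_zero) |>.mp this
      linarith
    have r : z = -c := by
      have : (z+c)^2 = 0 := by nlinarith [sq_nonneg (x+a), sq_nonneg (y+b), sq_nonneg (z+c)]
      have := pow_eq_zero_iff (two_ne_zero) |>.mp this
      linarith
    rw [p, q, r]
    simp
end

section
/- Proportionality of transversely isotropic deviators sharing a transversely isotropic pair (key step of Theorem 5): let n, m, k ∈ ℝ³ be unit vectors, let α, β ∈ ℝ with α ≠ 0 and β ≠ 0, and set hᵃ = α(n nᵀ − (1/3)·1), hᵇ = β(m mᵀ − (1/3)·1). If every R ∈ SO(3) with R k = k satisfies both R hᵃ Rᵀ = hᵃ and R hᵇ Rᵀ = hᵇ, then m = n or m = −n; in particular hᵇ = (β/α) · hᵃ. -/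
open scoped BigOperators
open Matrix

/-- Rotation by a quarter turn about `k`. -/
def quarterTurn (k : Fin 3 → ℝ) : Mat3 :=
  !![k 0 * k 0, k 0 * k 1 - k 2, k 0 * k 2 + k 1;
     k 1 * k 0 + k 2, k 1 * k 1, k 1 * k 2 - k 0;
     k 2 * k 0 - k 1, k 2 * k 1 + k 0, k 2 * k 2]

theorem quarterTurn_so3 (k : Fin 3 → ℝ) (hk : ∑ i, k i ^ 2 = 1) : IsSO3 (quarterTurn k) := by
  rw [Fin.sum_univ_three] at hk
  constructor
  · ext i j
    fin_cases i <;> fin_cases j <;>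
      simp [quarterTurn, Matrix.mul_apply, Fin.sum_univ_three] <;> grind
  · rw [Matrix.det_fin_three]
    simp [quarterTurn]
    grind

theorem quarterTurn_fix (k : Fin 3 → ℝ) (hk : ∑ i, k i ^ 2 = 1) :
    (quarterTurn k).mulVec k = k := by
  rw [Fin.sum_univ_three] at hk
  ext i
  fin_cases i <;>
    simp [quarterTurn, Matrix.mulVec, dotProduct, Fin.sum_univ_three] <;> grind

theorem sum_sq_zero (a b c : ℝ) (h : a ^ 2 + b ^ 2 + c ^ 2 = 0) : a = 0 ∧ b = 0 ∧ c = 0 := by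
  refine ⟨?_, ?_, ?_⟩ <;> refine pow_eq_zero_iff (two_ne_zero) |>.mp ?_ <;>
    linarith [sq_nonneg a, sq_nonneg b, sq_nonneg c]

theorem axis_of_fix (n k : Fin 3 → ℝ) (hn : ∑ i, n i ^ 2 = 1) (hk : ∑ i, k i ^ 2 = 1)
    (α : ℝ) (hα : α ≠ 0)
    (h : quarterTurn k * (α • devRank1 n) * (quarterTurn k)ᵀ = α • devRank1 n) :
    n = k ∨ n = -k := by
  have hR := quarterTurn_so3 k hk
  have hR1 : quarterTurn k * (quarterTurn k)ᵀ = 1 := mul_eq_one_comm.mp hR.1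
  have h2 : quarterTurn k * devRank1 n * (quarterTurn k)ᵀ = devRank1 n := by
    rw [Matrix.mul_smul, Matrix.smul_mul] at h
    exact smul_right_injective _ hα h
  have h3 : Matrix.vecMulVec ((quarterTurn k).mulVec n) ((quarterTurn k).mulVec n)
      = Matrix.vecMulVec n n := by
    unfold devRank1 at h2
    rw [Matrix.mul_sub, Matrix.sub_mul, Matrix.mul_smul, Matrix.smul_mul, Matrix.mul_one, hR1,
      sub_left_inj, Matrix.mul_vecMulVec, Matrix.vecMulVec_mul, Matrix.vecMul_transpose] at h2
    exact h2
  set v := (quarterTurn k).mulVec n with hv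
  have e : ∀ i j, v i * v j = n i * n j := fun i j => by
    have := congrFun (congrFun h3 i) j
    simpa [Matrix.vecMulVec_apply] using this
  rw [Fin.sum_univ_three] at hn hk
  have hnv : n 0 * v 0 + n 1 * v 1 + n 2 * v 2 = (k 0 * n 0 + k 1 * n 1 + k 2 * n 2) ^ 2 := by
    simp [hv, quarterTurn, Matrix.mulVec, dotProduct, Fin.sum_univ_three]
    ring
  have h4 : (n 0 * v 0 + n 1 * v 1 + n 2 * v 2) ^ 2 = (n 0 ^ 2 + n 1 ^ 2 + n 2 ^ 2) ^ 2 := by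
    linear_combination n 0 ^ 2 * e 0 0 + n 1 ^ 2 * e 1 1 + n 2 ^ 2 * e 2 2
      + 2 * n 0 * n 1 * e 0 1 + 2 * n 0 * n 2 * e 0 2 + 2 * n 1 * n 2 * e 1 2
  rw [hnv, hn] at h4
  have h5 : (k 0 * n 0 + k 1 * n 1 + k 2 * n 2) ^ 2 = 1 := by
    nlinarith [sq_nonneg (k 0 * n 0 + k 1 * n 1 + k 2 * n 2)]
  rcases (sq_eq_sq_iff_eq_or_eq_neg.mp (h5.trans (one_pow 2).symm)) with h6 | h6
  · left
    have h7 : (n 0 - k 0) ^ 2 + (n 1 - k 1) ^ 2 + (n 2 - k 2) ^ 2 = 0 := by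
      linear_combination hn + hk - 2 * h6
    ext i
    have h8 := sum_sq_zero _ _ _ h7
    obtain ⟨h8, h9, h10⟩ := h8
    fin_cases i
    · simp; linarith
    · simp; linarith
    · simp; linarith
  · right
    have h7 : (n 0 + k 0) ^ 2 + (n 1 + k 1) ^ 2 + (n 2 + k 2) ^ 2 = 0 := by
      linear_combination hn + hk + 2 * h6
    ext i
    have h8 := sum_sq_zero _ _ _ h7
    obtain ⟨h8, h9, h10⟩ := h8
    fin_cases i
    · simp; linarith
    · simp; linarith
    · simp; linarith

/-- Key step of Theorem 5. -/
theorem ti_deviators_proportional (n m k : Fin 3 → ℝ)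
    (hn : ∑ i, n i ^ 2 = 1) (hm : ∑ i, m i ^ 2 = 1) (hk : ∑ i, k i ^ 2 = 1)
    (α β : ℝ) (hα : α ≠ 0) (hβ : β ≠ 0)
    (hfix : ∀ R : Mat3, IsSO3 R → R.mulVec k = k →
      R * (α • devRank1 n) * Rᵀ = α • devRank1 n ∧
      R * (β • devRank1 m) * Rᵀ = β • devRank1 m) :
    (m = n ∨ m = -n) ∧ β • devRank1 m = (β / α) • (α • devRank1 n) := by
  obtain ⟨h1, h2⟩ := hfix _ (quarterTurn_so3 k hk) (quarterTurn_fix k hk)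
  have hmn : m = n ∨ m = -n := by
    rcases axis_of_fix n k hn hk α hα h1 with h | h <;>
      rcases axis_of_fix m k hm hk β hβ h2 with h' | h' <;> simp [h, h']
  refine ⟨hmn, ?_⟩
  have hd : devRank1 m = devRank1 n := by
    rcases hmn with h | h
    · rw [h]
    · rw [h]; simp [devRank1, Matrix.vecMulVec_neg, Matrix.neg_vecMulVec]
  rw [hd, smul_smul, div_mul_cancel₀ _ hα]
end

section
/- Theorem 5 (equality of pair symmetry groups): let n, m, k ∈ ℝ³ be unit vectors, α, β ∈ ℝ nonzero, hᵃ = α(n nᵀ − (1/3)·1), hᵇ = β(m mᵀ − (1/3)·1), and suppose every R ∈ SO(3) with R k = k satisfies R hᵃ Rᵀ = hᵃ and R hᵇ Rᵀ = hᵇ. Then for every fourth-order tensor H : Fin 3 → Fin 3 → Fin 3 → Fin 3 → ℝ, the set {R ∈ SO(3) | R ⋆ H = H and R hᵃ Rᵀ = hᵃ} equals the set {R ∈ SO(3) | R ⋆ H = H and R hᵇ Rᵀ = hᵇ}. -/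
open scoped BigOperators
open Matrix

/-- Quarter turn about `k`. -/
def qturn (k : Fin 3 → ℝ) : Mat3 :=
  !![k 0 * k 0, k 0 * k 1 - k 2, k 0 * k 2 + k 1;
     k 1 * k 0 + k 2, k 1 * k 1, k 1 * k 2 - k 0;
     k 2 * k 0 - k 1, k 2 * k 1 + k 0, k 2 * k 2]

theorem qturn_so3 (k : Fin 3 → ℝ) (hk : ∑ i, k i ^ 2 = 1) : IsSO3 (qturn k) := by
  rw [Fin.sum_univ_three] at hk
  constructor
  · ext i j
    fin_cases i <;> fin_cases j <;>
      simp [qturn, Matrix.mul_apply, Fin.sum_univ_three]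
    · linear_combination (k 0 * k 0 + 1) * hk
    · linear_combination (k 0 * k 1) * hk
    · linear_combination (k 0 * k 2) * hk
    · linear_combination (k 1 * k 0) * hk
    · linear_combination (k 1 * k 1 + 1) * hk
    · linear_combination (k 1 * k 2) * hk
    · linear_combination (k 2 * k 0) * hk
    · linear_combination (k 2 * k 1) * hk
    · linear_combination (k 2 * k 2 + 1) * hk
  · simp [qturn, Matrix.det_fin_three]
    linear_combination (k 0 ^ 2 + k 1 ^ 2 + k 2 ^ 2 + 1) * hk

theorem qturn_fix (k : Fin 3 → ℝ) (hk : ∑ i, k i ^ 2 = 1) : (qturn k).mulVec k = k := by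
  rw [Fin.sum_univ_three] at hk
  ext i
  fin_cases i <;> simp [qturn, Matrix.mulVec, dotProduct, Fin.sum_univ_three]
  · linear_combination k 0 * hk
  · linear_combination k 1 * hk
  · linear_combination k 2 * hk

theorem conj_dev_iff (R : Mat3) (hR : IsSO3 R) (a : ℝ) (ha : a ≠ 0) (n : Fin 3 → ℝ) :
    R * (a • devRank1 n) * Rᵀ = a • devRank1 n ↔
      vecMulVec (R.mulVec n) (R.mulVec n) = vecMulVec n n := by
  have h1 : R * Rᵀ = 1 := mul_eq_one_comm.mp hR.1
  have h2 : R * (a • devRank1 n) * Rᵀ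
      = a • (vecMulVec (R.mulVec n) (R.mulVec n) - (1/3 : ℝ) • 1) := by
    rw [devRank1, Matrix.mul_smul, Matrix.smul_mul, Matrix.mul_sub, Matrix.sub_mul,
      Matrix.mul_smul, Matrix.smul_mul, Matrix.mul_one, h1, Matrix.mul_vecMulVec,
      Matrix.vecMulVec_mul, Matrix.vecMul_transpose]
  rw [h2, devRank1]
  constructor
  · intro h
    exact sub_left_injective (smul_right_injective _ ha h)
  · intro h
    rw [h]

theorem dyad_eq (n k : Fin 3 → ℝ) (hn : ∑ i, n i ^ 2 = 1) (hk : ∑ i, k i ^ 2 = 1)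
    (h : vecMulVec ((qturn k).mulVec n) ((qturn k).mulVec n) = vecMulVec n n) :
    vecMulVec n n = vecMulVec k k := by
  rw [Fin.sum_univ_three] at hn hk
  obtain ⟨c, hc⟩ : ∃ c, c = k 0 * n 0 + k 1 * n 1 + k 2 * n 2 := ⟨_, rfl⟩
  obtain ⟨v, hv⟩ : ∃ v, v = (qturn k).mulVec n := ⟨_, rfl⟩
  have hvn : v 0 * n 0 + v 1 * n 1 + v 2 * n 2 = c ^ 2 := by
    rw [hv, hc]
    simp [qturn, Matrix.mulVec, dotProduct, Fin.sum_univ_three]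
    ring
  have e : ∀ i j, v i * v j = n i * n j := fun i j => by
    have := congrFun (congrFun h i) j
    rw [← hv] at this
    simpa [vecMulVec_apply] using this
  have h4 : c ^ 2 * c ^ 2 = 1 := by
    rw [← hvn]
    linear_combination n 0 * n 0 * e 0 0 + n 1 * n 1 * e 1 1 + n 2 * n 2 * e 2 2
      + 2 * n 0 * n 1 * e 0 1 + 2 * n 0 * n 2 * e 0 2 + 2 * n 1 * n 2 * e 1 2
      + (n 0 ^ 2 + n 1 ^ 2 + n 2 ^ 2 + 1) * hn
  have h2 : c ^ 2 = 1 := by nlinarith [sq_nonneg c]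
  have hz : (n 0 - c * k 0) ^ 2 + (n 1 - c * k 1) ^ 2 + (n 2 - c * k 2) ^ 2 = 0 := by
    linear_combination hn + c ^ 2 * hk + 2 * c * hc - h2
  have z : ∀ i, n i = c * k i := by
    intro i
    have : (n i - c * k i) ^ 2 = 0 := by
      have a0 := sq_nonneg (n 0 - c * k 0)
      have a1 := sq_nonneg (n 1 - c * k 1)
      have a2 := sq_nonneg (n 2 - c * k 2)
      fin_cases i <;> simp only [Fin.zero_eta, Fin.mk_one, Fin.reduceFinMk] <;> linarith
    exact sub_eq_zero.mp (pow_eq_zero_iff (two_ne_zero) |>.mp this)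
  ext i j
  rw [vecMulVec_apply, vecMulVec_apply, z i, z j]
  linear_combination k i * k j * h2

/-- Theorem 5: if `hᵃ` and `hᵇ` are transversely isotropic deviators whose pair is
still transversely isotropic, then for every fourth-order tensor `H` the symmetry
set of the pair `(hᵃ, H)` coincides with that of the pair `(hᵇ, H)`. -/
theorem pair_symmetry_equality (n m k : Fin 3 → ℝ)
    (hn : ∑ i, n i ^ 2 = 1) (hm : ∑ i, m i ^ 2 = 1) (hk : ∑ i, k i ^ 2 = 1)
    (α β : ℝ) (hα : α ≠ 0) (hβ : β ≠ 0)
    (hfix : ∀ R : Mat3, IsSO3 R → R.mulVec k = k →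
      R * (α • devRank1 n) * Rᵀ = α • devRank1 n ∧
      R * (β • devRank1 m) * Rᵀ = β • devRank1 m) :
    ∀ H : Tens4,
      {R : Mat3 | IsSO3 R ∧ rot4 R H = H ∧
          R * (α • devRank1 n) * Rᵀ = α • devRank1 n} =
      {R : Mat3 | IsSO3 R ∧ rot4 R H = H ∧
          R * (β • devRank1 m) * Rᵀ = β • devRank1 m} := by
  intro H
  have hq := hfix (qturn k) (qturn_so3 k hk) (qturn_fix k hk)
  have hnk := dyad_eq n k hn hk ((conj_dev_iff _ (qturn_so3 k hk) α hα n).mp hq.1)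
  have hmk := dyad_eq m k hm hk ((conj_dev_iff _ (qturn_so3 k hk) β hβ m).mp hq.2)
  have hd : devRank1 n = devRank1 m := by rw [devRank1, devRank1, hnk, hmk]
  ext R
  simp only [Set.mem_setOf_eq]
  refine and_congr_right fun hR => and_congr_right fun _ => ?_
  rw [hd, conj_dev_iff R hR α hα, conj_dev_iff R hR β hβ]
end

section
/- Clips of cyclic rotation groups (row [Z_m] ⊚ [Z_n] of the clips table): let m, n ≥ 2 and let C_m, C_n ≤ SO(3) be the cyclic groups of rotations about e₃ of orders m and n. For every g ∈ SO(3): if g e₃ = e₃ or g e₃ = −e₃, then C_m ∩ g C_n g⁻¹ = C_{gcd(m,n)}; otherwise C_m ∩ g C_n g⁻¹ is the trivial subgroup. -/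
open scoped BigOperators
open Matrix

/-- The rotation about `e₃ = (0,0,1)` with angle `θ`. -/
noncomputable def rotZ (θ : ℝ) : Mat3 :=
  !![Real.cos θ, -Real.sin θ, 0; Real.sin θ, Real.cos θ, 0; 0, 0, 1]

/-- The cyclic group `C_n` of rotations about `e₃` of order `n`, as a set of
matrices. -/
noncomputable def Cyc (n : ℕ) : Set Mat3 :=
  {R | ∃ k : ℤ, R = rotZ (2 * Real.pi * k / n)}

theorem aux_rotZ_zero : rotZ 0 = 1 := by
  ext i j; fin_cases i <;> fin_cases j <;> simp [rotZ]

theorem aux_rotZ_inj {a b : ℝ} (h : rotZ a = rotZ b) : ∃ j : ℤ, a - b = 2 * Real.pi * j := by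
  have hc : Real.cos a = Real.cos b := by simpa [rotZ] using congrFun (congrFun h 0) 0
  have hs : Real.sin a = Real.sin b := by simpa [rotZ] using congrFun (congrFun h 1) 0
  exact Real.Angle.angle_eq_iff_two_pi_dvd_sub.1 (Real.Angle.cos_sin_inj hc hs)

theorem aux_inter (m n : ℕ) (hm : 2 ≤ m) (hn : 2 ≤ n) :
    Cyc m ∩ Cyc n = Cyc (Nat.gcd m n) := by
  obtain ⟨d, m', n', hd, hco, rfl, rfl⟩ := Nat.exists_coprime' (m := m) (n := n)
    (Nat.gcd_pos_of_pos_left _ (by omega))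
  have hm0 : 0 < m' := Nat.pos_of_ne_zero (by rintro rfl; simp at hm)
  have hn0 : 0 < n' := Nat.pos_of_ne_zero (by rintro rfl; simp at hn)
  have hdR : (d : ℝ) ≠ 0 := by positivity
  have hmR : (m' : ℝ) ≠ 0 := by positivity
  have hnR : (n' : ℝ) ≠ 0 := by positivity
  have hpi := Real.pi_ne_zero
  rw [Nat.gcd_mul_right, Nat.Coprime.gcd_eq_one hco, one_mul]
  ext R
  constructor
  · rintro ⟨⟨k, rfl⟩, ⟨l, hl⟩⟩
    obtain ⟨j, hj⟩ := aux_rotZ_inj hl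
    push_cast at hj
    field_simp at hj
    have hZ : k * n' - l * m' = j * d * m' * n' := by
      have : (k * n' - l * m' : ℝ) = j * d * m' * n' := by linarith
      exact_mod_cast this
    have hdv : (m' : ℤ) ∣ k * n' := ⟨l + j * d * n', by linarith⟩
    have hk : (m' : ℤ) ∣ k :=
      IsCoprime.dvd_of_dvd_mul_right (Nat.isCoprime_iff_coprime.2 hco) hdv
    obtain ⟨t, rfl⟩ := hk
    refine ⟨t, ?_⟩
    congr 1
    push_cast
    field_simp
  · rintro ⟨k, rfl⟩
    refine ⟨⟨m' * k, ?_⟩, ⟨n' * k, ?_⟩⟩ <;>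
    · congr 1
      push_cast
      field_simp

theorem aux_conj (g : Mat3) (hg : IsSO3 g)
    (h : g.mulVec ![0, 0, 1] = ![0, 0, 1] ∨ g.mulVec ![0, 0, 1] = -![0, 0, 1]) :
    (∀ θ, g * rotZ θ * gᵀ = rotZ θ) ∨ (∀ θ, g * rotZ θ * gᵀ = rotZ (-θ)) := by
  obtain ⟨h1, hdet⟩ := hg
  have h2 : g * gᵀ = 1 := mul_eq_one_comm.1 h1
  have e := fun i j => congrFun (congrFun h2 i) j
  have e00 := e 0 0
  have e01 := e 0 1
  have e11 := e 1 1
  have e22 := e 2 2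
  simp [Matrix.mul_apply, Fin.sum_univ_three] at e00 e01 e11 e22
  rw [Matrix.det_fin_three] at hdet
  have key : ∀ ε : ℝ, ε * ε = 1 → g 0 2 = 0 → g 1 2 = 0 → g 2 2 = ε →
      ∀ θ, g * rotZ θ * gᵀ = !![Real.cos θ, -(ε * Real.sin θ), 0;
        ε * Real.sin θ, Real.cos θ, 0; 0, 0, 1] := by
    intro ε hε a b c θ
    have z0 : g 2 0 = 0 := by rw [c] at e22; nlinarith [sq_nonneg (g 2 0), sq_nonneg (g 2 1)]
    have z1 : g 2 1 = 0 := by rw [c] at e22; nlinarith [sq_nonneg (g 2 0), sq_nonneg (g 2 1)]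
    simp only [a, b, c, z0, z1] at e00 e01 e11 e22 hdet
    have hd : g 0 0 * g 1 1 - g 0 1 * g 1 0 = ε := by linear_combination ε * hdet - (g 0 0 * g 1 1 - g 0 1 * g 1 0) * hε
    ext i j
    fin_cases i <;> fin_cases j <;>
      simp [Matrix.mul_apply, Fin.sum_univ_three, rotZ, a, b, c, z0, z1]
    · linear_combination Real.cos θ * e00
    · linear_combination Real.cos θ * e01 - Real.sin θ * hd
    · linear_combination Real.cos θ * e01 + Real.sin θ * hd
    · linear_combination Real.cos θ * e11
    · exact hε
  rcases h with h | h
  · left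
    intro θ
    have q := fun i => congrFun h i
    have q0 := q 0
    have q1 := q 1
    have q2 := q 2
    simp [Matrix.mulVec, dotProduct, Fin.sum_univ_three] at q0 q1 q2
    rw [key 1 (by norm_num) q0 q1 q2]
    simp [rotZ]
  · right
    intro θ
    have q := fun i => congrFun h i
    have q0 := q 0
    have q1 := q 1
    have q2 := q 2
    simp [Matrix.mulVec, dotProduct, Fin.sum_univ_three] at q0 q1 q2
    rw [key (-1) (by norm_num) q0 q1 q2]
    simp [rotZ]

theorem aux_image (n : ℕ) (g : Mat3) (hg : IsSO3 g)
    (h : g.mulVec ![0, 0, 1] = ![0, 0, 1] ∨ g.mulVec ![0, 0, 1] = -![0, 0, 1]) :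
    (fun S => g * S * gᵀ) '' Cyc n = Cyc n := by
  ext R
  rcases aux_conj g hg h with h | h
  · constructor
    · rintro ⟨_, ⟨k, rfl⟩, rfl⟩
      exact ⟨k, h _⟩
    · rintro ⟨k, rfl⟩
      exact ⟨_, ⟨k, rfl⟩, h _⟩
  · constructor
    · rintro ⟨_, ⟨k, rfl⟩, rfl⟩
      refine ⟨-k, (h _).trans ?_⟩
      congr 1
      push_cast
      ring
    · rintro ⟨k, rfl⟩
      refine ⟨_, ⟨-k, rfl⟩, (h _).trans ?_⟩
      congr 1
      push_cast
      ring

theorem aux_trivial (g : Mat3) (hg : IsSO3 g) (a b : ℝ)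
    (h : ¬(g.mulVec ![0, 0, 1] = ![0, 0, 1] ∨ g.mulVec ![0, 0, 1] = -![0, 0, 1]))
    (hab : g * rotZ b * gᵀ = rotZ a) : rotZ a = 1 := by
  have h1 := hg.1
  have hc : rotZ a * g = g * rotZ b := by
    rw [← hab, Matrix.mul_assoc, h1, Matrix.mul_one]
  have q0 := congrFun (congrFun hc 0) 2
  have q1 := congrFun (congrFun hc 1) 2
  have e22 := congrFun (congrFun h1 2) 2
  simp [Matrix.mul_apply, Fin.sum_univ_three, rotZ] at q0 q1 e22
  have p0 : ((Real.cos a - 1) ^ 2 + Real.sin a ^ 2) * g 0 2 = 0 := by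
    linear_combination (Real.cos a - 1) * q0 + Real.sin a * q1
  have p1 : ((Real.cos a - 1) ^ 2 + Real.sin a ^ 2) * g 1 2 = 0 := by
    linear_combination (Real.cos a - 1) * q1 - Real.sin a * q0
  by_cases hz : (Real.cos a - 1) ^ 2 + Real.sin a ^ 2 = 0
  · have c1 : Real.cos a = 1 := by nlinarith [sq_nonneg (Real.cos a - 1), sq_nonneg (Real.sin a)]
    have s0 : Real.sin a = 0 := by nlinarith [sq_nonneg (Real.cos a - 1), sq_nonneg (Real.sin a)]
    rw [← aux_rotZ_zero]
    simp [rotZ, c1, s0]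
  · exfalso
    have u0 := (mul_eq_zero.1 p0).resolve_left hz
    have u1 := (mul_eq_zero.1 p1).resolve_left hz
    simp only [u0, u1] at e22
    have : g 2 2 * g 2 2 = 1 := by linarith
    apply h
    rcases mul_self_eq_one_iff.1 this with u2 | u2
    · left
      ext i
      fin_cases i <;> simp [Matrix.mulVec, dotProduct, Fin.sum_univ_three, u0, u1, u2]
    · right
      ext i
      fin_cases i <;> simp [Matrix.mulVec, dotProduct, Fin.sum_univ_three, u0, u1, u2]

/-- Clips of cyclic rotation groups: for `g ∈ SO(3)`, the intersection
`C_m ∩ g C_n g⁻¹` is `C_gcd(m,n)` if `g` fixes the axis `e₃` up to sign, and is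
trivial otherwise. -/
theorem clips_cyclic (m n : ℕ) (hm : 2 ≤ m) (hn : 2 ≤ n)
    (g : Mat3) (hg : IsSO3 g) :
    ((g.mulVec ![0, 0, 1] = ![0, 0, 1] ∨ g.mulVec ![0, 0, 1] = -![0, 0, 1]) →
      Cyc m ∩ ((fun S => g * S * gᵀ) '' Cyc n) = Cyc (Nat.gcd m n)) ∧
    (¬(g.mulVec ![0, 0, 1] = ![0, 0, 1] ∨ g.mulVec ![0, 0, 1] = -![0, 0, 1]) →
      Cyc m ∩ ((fun S => g * S * gᵀ) '' Cyc n) = {1}) := by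
  refine ⟨fun h => ?_, fun h => ?_⟩
  · rw [aux_image n g hg h, aux_inter m n hm hn]
  · ext R
    rw [Set.mem_singleton_iff]
    constructor
    · rintro ⟨⟨k, rfl⟩, ⟨_, ⟨l, rfl⟩, hl⟩⟩
      exact aux_trivial g hg _ _ h hl
    · rintro rfl
      have h2 : g * gᵀ = 1 := mul_eq_one_comm.1 hg.1
      exact ⟨⟨0, by simp [aux_rotZ_zero]⟩, 1, ⟨0, by simp [aux_rotZ_zero]⟩, by simp [h2]⟩
end

section
/- Isotropic deviatoric elasticity of the IDTI normal form: let a, b, c ∈ ℝ and let C be the fourth-order tensor on ℝ³ determined (together with all components obtained from the minor and major index symmetries) by C₁₁₁₁ = C₂₂₂₂ = a, C₁₁₂₂ = b, C₁₁₃₃ = C₂₂₃₃ = c, C₃₃₃₃ = a − 2b + 2c, C₁₃₁₃ = C₂₃₂₃ = (a − b)/2, C₁₂₁₂ = (a − b)/2, all other components zero. Then the deviatoric restriction of C is isotropic: ∑_{p,q,r,s} J_ijpq C_pqrs J_rskl = (a − b) · J_ijkl for all i, j, k, l. -/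
open scoped BigOperators

theorem aux_IJ (i j r s : Fin 3) : ∑ p, ∑ q, It i j p q * Jt p q r s = Jt i j r s := by
  fin_cases i <;> fin_cases j <;> fin_cases r <;> fin_cases s <;>
    simp [Fin.sum_univ_three, Jt, It, Kt, kdelta] <;> norm_num

theorem aux_JJ (i j r s : Fin 3) : ∑ p, ∑ q, Jt i j p q * Jt p q r s = Jt i j r s := by
  fin_cases i <;> fin_cases j <;> fin_cases r <;> fin_cases s <;>
    simp [Fin.sum_univ_three, Jt, It, Kt, kdelta] <;> norm_num

theorem aux_JD (i j : Fin 3) : ∑ p, ∑ q, Jt i j p q * kdelta p q = 0 := by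
  fin_cases i <;> fin_cases j <;>
    simp [Fin.sum_univ_three, Jt, It, Kt, kdelta] <;> norm_num

theorem aux_DJ (i j : Fin 3) : ∑ p, ∑ q, kdelta p q * Jt p q i j = 0 := by
  fin_cases i <;> fin_cases j <;>
    simp [Fin.sum_univ_three, Jt, It, Kt, kdelta] <;> norm_num

theorem aux_main (m : ℝ) (g : Fin 3 → Fin 3 → ℝ) (C : Tens4)
    (h : ∀ p q r s, C p q r s = m * It p q r s + kdelta p q * g r s + g p q * kdelta r s)
    (i j k l : Fin 3) :
    ∑ p, ∑ q, ∑ r, ∑ s, Jt i j p q * C p q r s * Jt r s k l = m * Jt i j k l := by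
  have e1 : ∀ p q, ∑ r, ∑ s, C p q r s * Jt r s k l
      = m * (∑ r, ∑ s, It p q r s * Jt r s k l)
        + kdelta p q * (∑ r, ∑ s, g r s * Jt r s k l)
        + g p q * (∑ r, ∑ s, kdelta r s * Jt r s k l) := by
    intro p q
    simp only [Finset.mul_sum, ← Finset.sum_add_distrib, h]
    refine Finset.sum_congr rfl fun r _ => Finset.sum_congr rfl fun s _ => ?_
    ring
  have e2 : ∀ p q, ∑ r, ∑ s, It p q r s * Jt r s k l = Jt p q k l :=
    fun p q => aux_IJ p q k l
  have e3 : ∀ p q, ∑ r, ∑ s, Jt i j p q * C p q r s * Jt r s k l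
      = m * (Jt i j p q * Jt p q k l)
        + (∑ r, ∑ s, g r s * Jt r s k l) * (Jt i j p q * kdelta p q) := by
    intro p q
    simp only [mul_assoc (Jt i j p q), ← Finset.mul_sum]
    rw [e1, e2, aux_DJ]
    ring
  simp only [e3, Finset.sum_add_distrib, ← Finset.mul_sum]
  rw [aux_JJ, aux_JD]
  ring

/-- Isotropic deviatoric elasticity of the IDTI normal form: the deviatoric
restriction `J : C : J` is isotropic. Indices are 0-based, so `0,1,2` stand for the
axes `1,2,3`. -/
theorem idti_isotropic_deviatoric (a b c : ℝ) (C : Tens4) (hsym : IsEla C)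
    (h1111 : C 0 0 0 0 = a) (h2222 : C 1 1 1 1 = a) (h1122 : C 0 0 1 1 = b)
    (h1133 : C 0 0 2 2 = c) (h2233 : C 1 1 2 2 = c)
    (h3333 : C 2 2 2 2 = a - 2 * b + 2 * c)
    (h1313 : C 0 2 0 2 = (a - b) / 2) (h2323 : C 1 2 1 2 = (a - b) / 2)
    (h1212 : C 0 1 0 1 = (a - b) / 2)
    (z1 : C 0 0 1 2 = 0) (z2 : C 0 0 0 2 = 0) (z3 : C 0 0 0 1 = 0)
    (z4 : C 1 1 1 2 = 0) (z5 : C 1 1 0 2 = 0) (z6 : C 1 1 0 1 = 0)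
    (z7 : C 2 2 1 2 = 0) (z8 : C 2 2 0 2 = 0) (z9 : C 2 2 0 1 = 0)
    (z10 : C 1 2 0 2 = 0) (z11 : C 1 2 0 1 = 0) (z12 : C 0 2 0 1 = 0) :
    ∀ i j k l, ∑ p, ∑ q, ∑ r, ∑ s, Jt i j p q * C p q r s * Jt r s k l =
      (a - b) * Jt i j k l := by
  have a1 : ∀ k l, C 1 0 k l = C 0 1 k l := fun k l => (hsym _ _ _ _).1
  have a2 : ∀ k l, C 2 0 k l = C 0 2 k l := fun k l => (hsym _ _ _ _).1
  have a3 : ∀ k l, C 2 1 k l = C 1 2 k l := fun k l => (hsym _ _ _ _).1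
  have b1 : ∀ k l, C k l 1 0 = C k l 0 1 := fun k l => (hsym _ _ _ _).2.1
  have b2 : ∀ k l, C k l 2 0 = C k l 0 2 := fun k l => (hsym _ _ _ _).2.1
  have b3 : ∀ k l, C k l 2 1 = C k l 1 2 := fun k l => (hsym _ _ _ _).2.1
  have m : ∀ i j k l x, C i j k l = x → C k l i j = x :=
    fun i j k l x h => (hsym k l i j).2.2.trans h
  have y0 := m _ _ _ _ _ h1122
  have y00 := m _ _ _ _ _ h1133
  have y000 := m _ _ _ _ _ h2233
  have y1 := m _ _ _ _ _ z1
  have y2 := m _ _ _ _ _ z2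
  have y3 := m _ _ _ _ _ z3
  have y4 := m _ _ _ _ _ z4
  have y5 := m _ _ _ _ _ z5
  have y6 := m _ _ _ _ _ z6
  have y7 := m _ _ _ _ _ z7
  have y8 := m _ _ _ _ _ z8
  have y9 := m _ _ _ _ _ z9
  have y10 := m _ _ _ _ _ z10
  have y11 := m _ _ _ _ _ z11
  have y12 := m _ _ _ _ _ z12
  refine aux_main (a - b)
    (fun r s => kdelta r s * (if r = 2 then c - b / 2 else b / 2)) C ?_
  intro p q r s
  fin_cases p <;> fin_cases q <;> fin_cases r <;> fin_cases s <;>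
    simp [It, kdelta, a1, a2, a3, b1, b2, b3, y0, y00, y000, h1111, h2222, h1122, h1133, h2233,
      h3333, h1313, h2323, h1212, z1, y1, z2, y2, z3, y3, z4, y4, z5, y5, z6, y6, z7, y7, z8, y8, z9, y9, z10, y10, z11, y11, z12, y12] <;> ring
end

section
/- Isotropic directional Young's modulus of the IYTI normal form: let a, b, c ∈ ℝ and let S be the fourth-order tensor on ℝ³ determined (together with all components obtained from the minor and major index symmetries) by S₁₁₁₁ = S₂₂₂₂ = S₃₃₃₃ = a, S₁₁₂₂ = b, S₁₁₃₃ = S₂₂₃₃ = c, S₁₃₁₃ = S₂₃₂₃ = (a − c)/2, S₁₂₁₂ = (a − b)/2, all other components zero. Then for every unit vector n ∈ ℝ³ (∑ᵢ nᵢ² = 1), the reciprocal directional Young's modulus ∑_{i,j,k,l} S_ijkl nᵢ nⱼ n_k n_l equals a; in particular it is independent of n. -/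
open scoped BigOperators

/-- Isotropic directional Young's modulus of the IYTI normal form: the reciprocal
directional Young's modulus equals `a` in every direction. Indices are 0-based, so
`0,1,2` stand for the axes `1,2,3`. -/
theorem iyti_isotropic_young (a b c : ℝ) (S : Tens4) (hsym : IsEla S)
    (h1111 : S 0 0 0 0 = a) (h2222 : S 1 1 1 1 = a) (h3333 : S 2 2 2 2 = a)
    (h1122 : S 0 0 1 1 = b) (h1133 : S 0 0 2 2 = c) (h2233 : S 1 1 2 2 = c)
    (h1313 : S 0 2 0 2 = (a - c) / 2) (h2323 : S 1 2 1 2 = (a - c) / 2)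
    (h1212 : S 0 1 0 1 = (a - b) / 2)
    (z1 : S 0 0 1 2 = 0) (z2 : S 0 0 0 2 = 0) (z3 : S 0 0 0 1 = 0)
    (z4 : S 1 1 1 2 = 0) (z5 : S 1 1 0 2 = 0) (z6 : S 1 1 0 1 = 0)
    (z7 : S 2 2 1 2 = 0) (z8 : S 2 2 0 2 = 0) (z9 : S 2 2 0 1 = 0)
    (z10 : S 1 2 0 2 = 0) (z11 : S 1 2 0 1 = 0) (z12 : S 0 2 0 1 = 0) :
    ∀ n : Fin 3 → ℝ, (∑ i, n i ^ 2 = 1) →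
      ∑ i, ∑ j, ∑ k, ∑ l, S i j k l * n i * n j * n k * n l = a := by
  intro n hn
  have p1 : ∀ k l, S 1 0 k l = S 0 1 k l := fun k l => (hsym 1 0 k l).1
  have p2 : ∀ k l, S 2 0 k l = S 0 2 k l := fun k l => (hsym 2 0 k l).1
  have p3 : ∀ k l, S 2 1 k l = S 1 2 k l := fun k l => (hsym 2 1 k l).1
  have q1 : ∀ k l, S k l 1 0 = S k l 0 1 := fun k l => (hsym k l 1 0).2.1
  have q2 : ∀ k l, S k l 2 0 = S k l 0 2 := fun k l => (hsym k l 2 0).2.1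
  have q3 : ∀ k l, S k l 2 1 = S k l 1 2 := fun k l => (hsym k l 2 1).2.1
  have m : ∀ i j k l, S i j k l = S k l i j := fun i j k l => (hsym i j k l).2.2
  simp only [Fin.sum_univ_three] at hn ⊢
  simp only [p1, p2, p3, q1, q2, q3]
  simp only [m 1 1 0 0, m 2 2 0 0, m 2 2 1 1, m 1 2 0 0, m 0 2 0 0, m 0 1 0 0,
    m 1 2 1 1, m 0 2 1 1, m 0 1 1 1, m 1 2 2 2, m 0 2 2 2, m 0 1 2 2,
    m 0 2 1 2, m 0 1 1 2, m 0 1 0 2]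
  simp only [h1111, h2222, h3333, h1122, h1133, h2233, h1313, h2323, h1212,
    z1, z2, z3, z4, z5, z6, z7, z8, z9, z10, z11, z12]
  linear_combination a * (n 0 ^ 2 + n 1 ^ 2 + n 2 ^ 2 + 1) * hn
end
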